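/- Let M > 1 be a positive integer, let λ₁ and λ₂ be primitive M-th roots of unity, and let α and β be positive integers with 1 < α < M, 1 < β < M, λ₁^α = λ₂, λ₂^β = λ₁ and αβ = M + 1. Let F ∈ 𝒪(ℂ²,0,0) be given by F(x₁,x₂) = (λ₁x₁ + x₂^β, λ₂x₂ + x₁^α). Then 0 is an isolated fixed point of both F and F^M, with μ_F(0) = 1, μ_{F^M}(0) = αβ = M + 1, P_M(F,0) = M, and 𝒪_M(F,0) = 1. -/

import Mathlib

open Metric Set Filter Topology Polynomial Asymptotics
open scoped Classical

noncomputable section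

namespace ZhangPaper

/-- `ℂⁿ`. -/
abbrev Cn (n : ℕ) := Fin n → ℂ

variable {n : ℕ}

/-- A germ in `𝒪(ℂⁿ,0,0)`: holomorphic near `0` and fixing the origin. -/
def IsGerm (f : Cn n → Cn n) : Prop := AnalyticAt ℂ f 0 ∧ f 0 = 0

/-- `q` is a regular value of `h` on `s`. -/
def IsRegularValueOn (h : Cn n → Cn n) (s : Set (Cn n)) (q : Cn n) : Prop :=
  ∀ x ∈ s, h x = q → Function.Bijective (fderiv ℂ h x)

/-- `m` is the zero order (multiplicity) of `h` at the isolated zero `p`: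
the number of solutions of `h x = q` near `p`, for any regular value `q`
with `‖q‖` sufficiently small. -/
def HasZeroOrder (h : Cn n → Cn n) (p : Cn n) (m : ℕ) : Prop :=
  ∃ r > 0, AnalyticOnNhd ℂ h (closedBall p r) ∧ h p = 0 ∧
    (∀ x ∈ closedBall p r, h x = 0 → x = p) ∧
    (∀ ε > 0, ∃ q : Cn n, ‖q‖ < ε ∧ IsRegularValueOn h (ball p r) q) ∧
    ∃ δ > 0, ∀ q : Cn n, ‖q‖ < δ → IsRegularValueOn h (ball p r) q →
      {x ∈ ball p r | h x = q}.ncard = m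

/-- The zero order `π_h(p)` of `h` at `p`. -/
def zeroOrder (h : Cn n → Cn n) (p : Cn n) : ℕ := sInf {m | HasZeroOrder h p m}

/-- The fixed point index `μ_g(p)` of `g` at `p`. -/
def fixedPointIndex (g : Cn n → Cn n) (p : Cn n) : ℕ :=
  zeroOrder (fun x => x - g x) p

/-- The local Dold index `P_M(f,0)`. -/
def doldIndex (f : Cn n → Cn n) (M : ℕ) : ℤ :=
  ∑ τ ∈ M.primeFactors.powerset,
    (-1 : ℤ) ^ τ.card * (fixedPointIndex (f^[M / (∏ p ∈ τ, p)]) 0 : ℤ)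

/-- `x` is a periodic point of exact period `M` for `g`. -/
def ExactPeriodicPt (g : Cn n → Cn n) (M : ℕ) (x : Cn n) : Prop :=
  g^[M] x = x ∧ ∀ j, 0 < j → j < M → g^[j] x ≠ x

/-- `g` has at least `m` distinct periodic orbits of period `M` inside `B`. -/
def AtLeastOrbits (g : Cn n → Cn n) (M m : ℕ) (B : Set (Cn n)) : Prop :=
  ∃ p : Fin m → Cn n,
    (∀ i, ExactPeriodicPt g M (p i) ∧ ∀ j < M, g^[j] (p i) ∈ B) ∧
    ∀ i j : Fin m, i ≠ j → ∀ l < M, g^[l] (p i) ≠ p j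

/-- `g` has exactly `m` distinct periodic orbits of period `M` inside `B`. -/
def ExactlyOrbits (g : Cn n → Cn n) (M m : ℕ) (B : Set (Cn n)) : Prop :=
  AtLeastOrbits g M m B ∧ ¬ AtLeastOrbits g M (m + 1) B

/-- The number `𝒪_M(f,0)` of periodic orbits of period `M` of `f` hidden at the
fixed point `0`: the largest `m` such that there is a ball `B` centered at `0` in which
`0` is the only fixed point of `f^M`, and a sequence of holomorphic maps fixing `0`
converging to `f` uniformly on `B`, each having `m` distinct periodic orbits of
period `M` in `B`. -/
def hiddenOrbits (f : Cn n → Cn n) (M : ℕ) : ℕ :=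
  sSup {m | ∃ r > 0,
    (∀ x ∈ closedBall (0 : Cn n) r, f^[M] x = x → x = 0) ∧
    ∃ fk : ℕ → Cn n → Cn n,
      (∀ k, AnalyticOnNhd ℂ (fk k) (ball (0 : Cn n) r) ∧ fk k 0 = 0) ∧
      TendstoUniformlyOn fk f atTop (ball (0 : Cn n) r) ∧
      ∀ k, AtLeastOrbits (fk k) M m (ball (0 : Cn n) r)}

/-- `0` is an isolated fixed point of `g`. -/
def IsolatedFixedPtAt0 (g : Cn n → Cn n) : Prop :=
  g 0 = 0 ∧ ∀ᶠ x in 𝓝[≠] (0 : Cn n), g x ≠ x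

/-- `0` is an isolated zero of `h`. -/
def IsolatedZeroAt0 (h : Cn n → Cn n) : Prop :=
  h 0 = 0 ∧ ∀ᶠ x in 𝓝[≠] (0 : Cn n), h x ≠ 0

/-- `p` is a simple fixed point of `g`: `Dg(p)` has no eigenvalue `1`. -/
def SimpleFixedPt (g : Cn n → Cn n) (p : Cn n) : Prop :=
  g p = p ∧ ¬ Module.End.HasEigenvalue ((fderiv ℂ g p).toLinearMap) 1

/-- The global fixed point index `L(g)` of `g` over `U`: the sum of the fixed point
indices at all fixed points of `g` in `U`. -/
def globalIndex (g : Cn n → Cn n) (U : Set (Cn n)) : ℤ :=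
  ∑ᶠ p ∈ {x ∈ U | g x = x}, (fixedPointIndex g p : ℤ)

/-- The global Dold index `P_M(f)` over `U`. -/
def globalDold (f : Cn n → Cn n) (M : ℕ) (U : Set (Cn n)) : ℤ :=
  ∑ τ ∈ M.primeFactors.powerset,
    (-1 : ℤ) ^ τ.card * globalIndex (f^[M / (∏ p ∈ τ, p)]) U

/-- The closed unit bidisc. -/
abbrev KK : Set (Cn 2) := closedBall (0 : Cn 2) 1

theorem mem_KK {x : Cn 2} : x ∈ KK ↔ ∀ i, ‖x i‖ ≤ 1 := by
  rw [mem_closedBall_zero_iff, pi_norm_le_iff_of_nonneg zero_le_one]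

theorem update_mem_KK {x : Cn 2} (hx : x ∈ KK) (i : Fin 2) {z : ℂ} (hz : ‖z‖ ≤ 1) :
    Function.update x i z ∈ KK := by
  rw [mem_KK] at *
  intro j
  by_cases h : j = i
  · subst h; simpa using hz
  · simpa [Function.update_of_ne h] using hx j

/-- Extension by zero of a function on the bidisc. -/
def ext0 (f : C(KK, ℂ)) (x : Cn 2) : ℂ := if h : x ∈ KK then f ⟨x, h⟩ else 0

theorem ext0_of_mem (f : C(KK, ℂ)) {x : Cn 2} (hx : x ∈ KK) : ext0 f x = f ⟨x, hx⟩ := by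
  simp only [ext0, dif_pos hx]

/-- The bidisc algebra: continuous on the closed bidisc and holomorphic on slices. -/
def BAsub : Subalgebra ℂ C(KK, ℂ) where
  carrier := {f | ∀ x ∈ KK, ∀ i, DifferentiableOn ℂ
    (fun z => ext0 f (Function.update x i z)) (ball 0 1)}
  mul_mem' := by
    intro f g hf hg x hx i
    refine ((hf x hx i).mul (hg x hx i)).congr fun z hz => ?_
    have hz' : ‖z‖ ≤ 1 := by simpa using (mem_ball_zero_iff.1 hz).le
    simp [ext0_of_mem _ (update_mem_KK hx i hz')]
  add_mem' := by
    intro f g hf hg x hx i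
    refine ((hf x hx i).add (hg x hx i)).congr fun z hz => ?_
    have hz' : ‖z‖ ≤ 1 := by simpa using (mem_ball_zero_iff.1 hz).le
    simp [ext0_of_mem _ (update_mem_KK hx i hz')]
  algebraMap_mem' := by
    intro c x hx i
    refine (differentiableOn_const c).congr fun z hz => ?_
    have hz' : ‖z‖ ≤ 1 := by simpa using (mem_ball_zero_iff.1 hz).le
    simp [ext0_of_mem _ (update_mem_KK hx i hz')]

/-- The bidisc algebra as a type. -/
def BA : Type := BAsub

instance : NormedCommRing BA := inferInstanceAs (NormedCommRing BAsub)

instance : NormedAlgebra ℂ BA := inferInstanceAs (NormedAlgebra ℂ BAsub)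

/-- Evaluation of an element of the bidisc algebra. -/
def ev (f : BA) (x : Cn 2) : ℂ := ext0 f.1 x

theorem ev_of_mem (f : BA) {x : Cn 2} (hx : x ∈ KK) : ev f x = f.1 ⟨x, hx⟩ := ext0_of_mem _ hx

theorem BA_ext {f g : BA} (h : ∀ x ∈ KK, ev f x = ev g x) : f = g := by
  apply Subtype.ext
  ext ⟨x, hx⟩
  simpa [ev_of_mem _ hx] using h x hx

theorem ev_of_not_mem (f : BA) {x : Cn 2} (hx : x ∉ KK) : ev f x = 0 := by
  simp only [ev, ext0, dif_neg hx]

theorem ev_add (f g : BA) (x : Cn 2) : ev (f + g) x = ev f x + ev g x := by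
  by_cases h : x ∈ KK
  · simp only [ev_of_mem _ h]; rfl
  · simp only [ev_of_not_mem _ h, add_zero]

theorem ev_sub (f g : BA) (x : Cn 2) : ev (f - g) x = ev f x - ev g x := by
  by_cases h : x ∈ KK
  · simp only [ev_of_mem _ h]; rfl
  · simp only [ev_of_not_mem _ h, sub_zero]

theorem ev_mul (f g : BA) (x : Cn 2) : ev (f * g) x = ev f x * ev g x := by
  by_cases h : x ∈ KK
  · simp only [ev_of_mem _ h]; rfl
  · simp only [ev_of_not_mem _ h, mul_zero]

theorem ev_smul (c : ℂ) (g : BA) (x : Cn 2) : ev (c • g) x = c * ev g x := by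
  by_cases h : x ∈ KK
  · simp only [ev_of_mem _ h]; rfl
  · simp only [ev_of_not_mem _ h, mul_zero]

theorem ev_one {x : Cn 2} (hx : x ∈ KK) : ev 1 x = 1 := by rw [ev_of_mem _ hx]; rfl

theorem ev_zero (x : Cn 2) : ev 0 x = 0 := by
  by_cases h : x ∈ KK
  · rw [ev_of_mem _ h]; rfl
  · rw [ev_of_not_mem _ h]

theorem ev_algebraMap {x : Cn 2} (hx : x ∈ KK) (c : ℂ) : ev (algebraMap ℂ BA c) x = c := by
  rw [ev_of_mem _ hx]; rfl

theorem ev_continuousOn (f : BA) : ContinuousOn (ev f) KK := by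
  rw [continuousOn_iff_continuous_domRestrict]
  convert f.1.continuous using 1
  ext x
  simp [ev_of_mem f x.2]

theorem ev_diff (f : BA) {x : Cn 2} (hx : x ∈ KK) (i : Fin 2) :
    DifferentiableOn ℂ (fun z => ev f (Function.update x i z)) (ball 0 1) := f.2 x hx i

theorem ev_le_norm (f : BA) (x : Cn 2) : ‖ev f x‖ ≤ ‖f‖ := by
  by_cases h : x ∈ KK
  · rw [ev_of_mem _ h]; exact f.1.norm_coe_le_norm _
  · have : ev f x = 0 := by simp only [ev, ext0, dif_neg h]
    rw [this, norm_zero]; exact norm_nonneg f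

theorem BA_norm_le {f : BA} {C : ℝ} (hC : 0 ≤ C) (h : ∀ x ∈ KK, ‖ev f x‖ ≤ C) : ‖f‖ ≤ C := by
  change ‖f.1‖ ≤ C
  rw [ContinuousMap.norm_le _ hC]
  rintro ⟨x, hx⟩
  simpa [ev_of_mem _ hx] using h x hx

/-- Constructor for elements of the bidisc algebra. -/
def mkBA (F : Cn 2 → ℂ) (hc : ContinuousOn F KK)
    (hd : ∀ x ∈ KK, ∀ i, DifferentiableOn ℂ (fun z => F (Function.update x i z)) (ball 0 1)) : BA :=
  ⟨⟨KK.domRestrict F, continuousOn_iff_continuous_domRestrict.1 hc⟩, by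
    intro x hx i
    refine (hd x hx i).congr fun z hz => ?_
    have hz' : ‖z‖ ≤ 1 := by simpa using (mem_ball_zero_iff.1 hz).le
    rw [ext0_of_mem _ (update_mem_KK hx i hz')]
    rfl⟩

theorem ev_mkBA {F : Cn 2 → ℂ} {hc hd} {x : Cn 2} (hx : x ∈ KK) : ev (mkBA F hc hd) x = F x := by
  rw [ev_of_mem _ hx]; rfl

theorem slice_cont {F : Cn 2 → ℂ} (hF : ContinuousOn F KK) {x : Cn 2} (hx : x ∈ KK) (i : Fin 2) :
    ContinuousOn (fun z => F (Function.update x i z)) (closedBall 0 1) := by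
  refine hF.comp (f := fun z => Function.update x i z) ?_ ?_
  · exact ((continuous_const (y := x)).update i continuous_id).continuousOn
  · intro z hz; exact update_mem_KK hx i (by simpa using hz)

instance : CompleteSpace BA := by
  have : IsClosed (BAsub : Set C(KK, ℂ)) := by
    apply IsSeqClosed.isClosed
    intro u f hu hf x hx i
    have h1 : TendstoUniformlyOn (fun n z => ext0 (u n) (Function.update x i z))
        (fun z => ext0 f (Function.update x i z)) atTop (ball 0 1) := by
      rw [Metric.tendstoUniformlyOn_iff]
      intro ε hε
      rw [ContinuousMap.tendsto_iff_tendstoUniformly, Metric.tendstoUniformly_iff] at hf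
      filter_upwards [hf ε hε] with n hn z hz
      have hz' : ‖z‖ ≤ 1 := by simpa using (mem_ball_zero_iff.1 hz).le
      simp only [ext0_of_mem _ (update_mem_KK hx i hz')]
      exact hn _
    exact h1.tendstoLocallyUniformlyOn.differentiableOn
      (Eventually.of_forall fun n => hu n x hx i) isOpen_ball
  exact this.completeSpace_coe

instance : NormOneClass BA := ⟨by
  change ‖(1 : C(KK, ℂ))‖ = 1
  have : Nonempty KK := ⟨⟨0, by simp⟩⟩
  exact norm_one⟩

/-- One variable division bound. -/
theorem dslope_bound {φ : ℂ → ℂ} (hc : ContinuousOn φ (closedBall 0 1))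
    (hd : DifferentiableOn ℂ φ (ball 0 1)) {p : ℂ} (hp : ‖p‖ < 1) {C : ℝ}
    (hC : ∀ z, ‖z‖ ≤ 1 → ‖φ z‖ ≤ C) {z : ℂ} (hz : ‖z‖ ≤ 1) :
    ‖dslope φ p z‖ ≤ 2 * C / (1 - ‖p‖) := by
  have hpb : p ∈ ball (0 : ℂ) 1 := by simpa using hp
  have hpn : ball (0 : ℂ) 1 ∈ 𝓝 p := isOpen_ball.mem_nhds hpb
  have hcl : closure (ball (0 : ℂ) 1) = closedBall 0 1 := closure_ball 0 one_ne_zero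
  have hdc : DiffContOnCl ℂ (dslope φ p) (ball 0 1) := by
    refine ⟨(Complex.differentiableOn_dslope hpn).2 hd, ?_⟩
    rw [hcl]
    exact (continuousOn_dslope (mem_of_superset hpn ball_subset_closedBall)).2
      ⟨hc, hd.differentiableAt hpn⟩
  refine Complex.norm_le_of_forall_mem_frontier_norm_le isBounded_ball hdc ?_
    (by rw [hcl]; simpa using hz)
  intro w hw
  rw [frontier_ball _ one_ne_zero] at hw
  have hw1 : ‖w‖ = 1 := by simpa using hw
  have hne : w ≠ p := by rintro rfl; linarith
  rw [dslope_of_ne _ hne, slope_def_field, norm_div]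
  have h1 : 1 - ‖p‖ ≤ ‖w - p‖ := by rw [← hw1]; exact norm_sub_norm_le _ _
  have h2 : ‖φ w - φ p‖ ≤ 2 * C := by
    linarith [norm_sub_le (φ w) (φ p), hC w hw1.le, hC p hp.le]
  have h0 : 0 < 1 - ‖p‖ := by linarith
  have : 0 ≤ C := (norm_nonneg _).trans (hC w hw1.le)
  gcongr

theorem dslope_sub' {φ ψ : ℂ → ℂ} {p : ℂ} (h1 : DifferentiableAt ℂ φ p)
    (h2 : DifferentiableAt ℂ ψ p) (z : ℂ) :
    dslope (fun z => φ z - ψ z) p z = dslope φ p z - dslope ψ p z := by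
  by_cases h : z = p
  · subst h; simp only [dslope_same]; exact deriv_sub h1 h2
  · simp only [dslope_of_ne _ h, slope_def_field]; ring

/-- The slice quotient. -/
def quo (F : Cn 2 → ℂ) (i : Fin 2) (p : ℂ) (x : Cn 2) : ℂ :=
  dslope (fun z => F (Function.update x i z)) p (x i)

theorem quo_continuousOn (f : BA) (i : Fin 2) {p : ℂ} (hp : ‖p‖ < 1) :
    ContinuousOn (quo (ev f) i p) KK := by
  have hpb : p ∈ ball (0 : ℂ) 1 := by simpa using hp
  have hpn : ball (0 : ℂ) 1 ∈ 𝓝 p := isOpen_ball.mem_nhds hpb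
  have hcl : closedBall (0 : ℂ) 1 ∈ 𝓝 p := mem_of_superset hpn ball_subset_closedBall
  have h0 : 0 < 1 - ‖p‖ := by linarith
  intro x0 hx0
  have hUC : UniformContinuousOn (ev f) KK :=
    (isCompact_closedBall _ _).uniformContinuousOn_of_continuous (ev_continuousOn f)
  have hA : ContinuousWithinAt
      (fun x : Cn 2 => dslope (fun z => ev f (Function.update x0 i z)) p (x i)) KK x0 := by
    have := ((continuousOn_dslope hcl).2 ⟨slice_cont (ev_continuousOn f) hx0 i,
      (ev_diff f hx0 i).differentiableAt hpn⟩) (x0 i) (by simpa using mem_KK.1 hx0 i)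
    refine this.comp (f := fun x : Cn 2 => x i) (continuous_apply i).continuousWithinAt ?_
    intro x hx; simpa using mem_KK.1 hx i
  rw [Metric.continuousWithinAt_iff] at hA ⊢
  rw [Metric.uniformContinuousOn_iff] at hUC
  intro ε hε
  obtain ⟨δ1, hδ1, H1⟩ := hA (ε / 2) (by positivity)
  obtain ⟨δ2, hδ2, H2⟩ := hUC (ε * (1 - ‖p‖) / 8) (by positivity)
  refine ⟨min δ1 δ2, lt_min hδ1 hδ2, fun x hx hd => ?_⟩
  have a1 := H1 hx (hd.trans_le (min_le_left _ _))
  have a2 : dist (quo (ev f) i p x)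
      (dslope (fun z => ev f (Function.update x0 i z)) p (x i)) ≤ 2 * (ε * (1 - ‖p‖) / 8) / (1 - ‖p‖) := by
    rw [dist_eq_norm, quo, ← dslope_sub' ((ev_diff f hx i).differentiableAt hpn)
      ((ev_diff f hx0 i).differentiableAt hpn)]
    refine dslope_bound ((slice_cont (ev_continuousOn f) hx i).sub
      (slice_cont (ev_continuousOn f) hx0 i)) ((ev_diff f hx i).sub (ev_diff f hx0 i)) hp ?_
      (mem_KK.1 hx i)
    intro z hz
    change ‖ev f (Function.update x i z) - ev f (Function.update x0 i z)‖ ≤ _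
    rw [← dist_eq_norm]
    refine (H2 _ (update_mem_KK hx i hz) _ (update_mem_KK hx0 i hz) ?_).le
    refine lt_of_le_of_lt ?_ (hd.trans_le (min_le_right _ _))
    rw [dist_pi_le_iff dist_nonneg]
    intro j
    by_cases h : j = i
    · subst h; simp
    · simp only [Function.update_of_ne h]; exact dist_le_pi_dist x x0 j
  have e : 2 * (ε * (1 - ‖p‖) / 8) / (1 - ‖p‖) = ε / 4 := by field_simp; norm_num
  rw [e] at a2
  calc dist (quo (ev f) i p x) (quo (ev f) i p x0) ≤ _ + _ := dist_triangle _ _ _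
    _ < ε := by
      have : dist (dslope (fun z => ev f (Function.update x0 i z)) p (x i)) (quo (ev f) i p x0) < ε / 2 := a1
      linarith

theorem quo_mul (f : BA) (i : Fin 2) {p : ℂ} (x : Cn 2) :
    (x i - p) * quo (ev f) i p x = ev f x - ev f (Function.update x i p) := by
  have := sub_smul_dslope (fun z => ev f (Function.update x i z)) p (x i)
  simpa [quo] using this

theorem exists_seq_ne {p : ℂ} (hp : ‖p‖ < 1) :
    ∃ w : ℕ → ℂ, Tendsto w atTop (𝓝 p) ∧ ∀ n, w n ≠ p ∧ ‖w n‖ ≤ 1 := by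
  have h : ∃ᶠ z in 𝓝 p, z ≠ p ∧ ‖z‖ ≤ 1 := by
    have h1 : ∃ᶠ z in 𝓝 p, z ≠ p := by
      have : ∃ᶠ z in 𝓝[≠] p, z ≠ p :=
        (eventually_mem_nhdsWithin (a := p) (s := {p}ᶜ)).frequently
      exact this.filter_mono nhdsWithin_le_nhds
    refine (h1.and_eventually (isOpen_ball.mem_nhds (show p ∈ ball (0:ℂ) 1 by simpa using hp))).mono ?_
    rintro z ⟨a, b⟩
    exact ⟨a, by simpa using (mem_ball_zero_iff.1 b).le⟩
  exact Filter.exists_seq_forall_of_frequently h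

theorem quo_diff (f : BA) (i : Fin 2) {p : ℂ} (hp : ‖p‖ < 1) (x : Cn 2) (hx : x ∈ KK) (j : Fin 2) :
    DifferentiableOn ℂ (fun z => quo (ev f) i p (Function.update x j z)) (ball 0 1) := by
  have hpb : p ∈ ball (0 : ℂ) 1 := by simpa using hp
  have hpn : ball (0 : ℂ) 1 ∈ 𝓝 p := isOpen_ball.mem_nhds hpb
  by_cases hij : j = i
  · subst hij
    refine ((Complex.differentiableOn_dslope hpn).2 (ev_diff f hx j)).congr fun z _ => ?_
    simp [quo]
  · have key : ∀ y ∈ KK, y i ≠ p →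
        DifferentiableOn ℂ (fun z => quo (ev f) i p (Function.update y j z)) (ball 0 1) := by
      intro y hy hne
      have : ∀ z, quo (ev f) i p (Function.update y j z) =
          (y i - p)⁻¹ * (ev f (Function.update y j z) -
            ev f (Function.update (Function.update y i p) j z)) := by
        intro z
        have h1 := quo_mul f i (p := p) (Function.update y j z)
        rw [Function.update_of_ne (Ne.symm hij), Function.update_comm hij] at h1
        rw [← h1, inv_mul_cancel_left₀ (sub_ne_zero.2 hne)]
      simp only [this]
      exact (((ev_diff f hy j).sub (ev_diff f (update_mem_KK hy i hp.le) j))).const_mul _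
    by_cases hne : x i = p
    swap
    · exact key x hx hne
    obtain ⟨w, hw, hw'⟩ := exists_seq_ne hp
    have hUC : UniformContinuousOn (quo (ev f) i p) KK :=
      (isCompact_closedBall _ _).uniformContinuousOn_of_continuous (quo_continuousOn f i hp)
    have h1 : TendstoUniformlyOn
        (fun n z => quo (ev f) i p (Function.update (Function.update x i (w n)) j z))
        (fun z => quo (ev f) i p (Function.update x j z)) atTop (ball 0 1) := by
      rw [Metric.tendstoUniformlyOn_iff]
      intro ε hε
      obtain ⟨δ, hδ, H⟩ := Metric.uniformContinuousOn_iff.1 hUC ε hε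
      filter_upwards [Metric.tendsto_nhds.1 hw δ hδ] with n hn z hz
      have hz' : ‖z‖ ≤ 1 := by simpa using (mem_ball_zero_iff.1 hz).le
      refine H _ (update_mem_KK hx j hz') _
        (update_mem_KK (update_mem_KK hx i (hw' n).2) j hz') ?_
      rw [dist_pi_lt_iff hδ]
      intro k
      by_cases hk : k = j
      · subst hk; simpa using hδ
      · rw [Function.update_of_ne hk, Function.update_of_ne hk]
        by_cases hki : k = i
        · subst hki; simpa [hne, dist_comm] using hn
        · rw [Function.update_of_ne hki]; simpa using hδ
    refine h1.tendstoLocallyUniformlyOn.differentiableOn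
      (Eventually.of_forall fun n => ?_) isOpen_ball
    exact key _ (update_mem_KK hx i (hw' n).2) (by simpa using (hw' n).1)

/-- Division by `x i - p` in the bidisc algebra. -/
def dv (i : Fin 2) {p : ℂ} (hp : ‖p‖ < 1) (f : BA) : BA :=
  mkBA (quo (ev f) i p) (quo_continuousOn f i hp) (quo_diff f i hp)

/-- Restriction to `x i = p`. -/
def rs (i : Fin 2) {p : ℂ} (hp : ‖p‖ < 1) (f : BA) : BA :=
  mkBA (fun x => ev f (Function.update x i p))
    ((ev_continuousOn f).comp (f := fun x : Cn 2 => Function.update x i p)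
      (continuous_id.update i continuous_const).continuousOn
      (fun x hx => update_mem_KK hx i hp.le))
    (by
      intro x hx j
      by_cases hij : j = i
      · subst hij; simp
      · simp only [Function.update_comm hij]
        exact ev_diff f (update_mem_KK hx i hp.le) j)

theorem ev_rs (i : Fin 2) {p : ℂ} (hp : ‖p‖ < 1) (f : BA) {x : Cn 2} (hx : x ∈ KK) :
    ev (rs i hp f) x = ev f (Function.update x i p) := ev_mkBA hx

/-- The coordinate functions. -/
def XX (i : Fin 2) : BA := mkBA (fun x => x i) (continuous_apply i).continuousOn (by
  intro x hx j
  by_cases hij : i = j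
  · subst hij; simp only [Function.update_self]; exact differentiableOn_id
  · simp [Function.update_of_ne hij])

theorem ev_XX (i : Fin 2) {x : Cn 2} (hx : x ∈ KK) : ev (XX i) x = x i := ev_mkBA hx

theorem dv_mul (i : Fin 2) {p : ℂ} (hp : ‖p‖ < 1) (f : BA) :
    (XX i - algebraMap ℂ BA p) * dv i hp f = f - rs i hp f := by
  apply BA_ext
  intro x hx
  rw [ev_mul, ev_sub, ev_sub, ev_XX i hx, ev_algebraMap hx, ev_rs i hp f hx, dv, ev_mkBA hx,
    quo_mul]

theorem dv_norm_le (i : Fin 2) {p : ℂ} (hp : ‖p‖ < 1) (f : BA) :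
    ‖dv i hp f‖ ≤ 2 * ‖f‖ / (1 - ‖p‖) := by
  have h0 : 0 < 1 - ‖p‖ := by linarith
  refine BA_norm_le (by positivity) fun x hx => ?_
  rw [dv, ev_mkBA hx]
  exact dslope_bound (slice_cont (ev_continuousOn f) hx i) (ev_diff f hx i) hp
    (fun z _ => ev_le_norm f _) (mem_KK.1 hx i)

theorem dv_unique (i : Fin 2) {p : ℂ} (hp : ‖p‖ < 1) {f g : BA}
    (h : (XX i - algebraMap ℂ BA p) * f = (XX i - algebraMap ℂ BA p) * g) : f = g := by
  have key : ∀ x ∈ KK, x i ≠ p → ev f x = ev g x := by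
    intro x hx hne
    have := congrArg (fun a => ev a x) h
    simp only [ev_mul, ev_sub, ev_XX i hx, ev_algebraMap hx] at this
    exact mul_left_cancel₀ (sub_ne_zero.2 hne) this
  apply BA_ext
  intro x hx
  by_cases hne : x i = p
  swap
  · exact key x hx hne
  obtain ⟨w, hw, hw'⟩ := exists_seq_ne hp
  have hpn : closedBall (0 : ℂ) 1 ∈ 𝓝 p :=
    mem_of_superset (isOpen_ball.mem_nhds (by simpa using hp)) ball_subset_closedBall
  have lim : ∀ a : BA, Tendsto (fun n => ev a (Function.update x i (w n))) atTop (𝓝 (ev a x)) := by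
    intro a
    have := ((slice_cont (ev_continuousOn a) hx i).continuousAt hpn).tendsto.comp hw
    have e : Function.update x i p = x := by rw [← hne]; simp
    simpa [e, Function.comp_def] using this
  refine tendsto_nhds_unique (lim f) ((lim g).congr fun n => ?_)
  exact (key _ (update_mem_KK hx i (hw' n).2) (by simpa using (hw' n).1)).symm

theorem norm_zero_lt : ‖(0 : ℂ)‖ < 1 := by simp

/-- Restriction to `x i = 0`, as a linear map. -/
def RR (i : Fin 2) : BA →ₗ[ℂ] BA where
  toFun := rs i norm_zero_lt
  map_add' := fun f g => BA_ext fun x hx => by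
    rw [ev_add, ev_rs _ _ _ hx, ev_rs _ _ _ hx, ev_rs _ _ _ hx, ev_add]
  map_smul' := fun c g => BA_ext fun x hx => by
    rw [RingHom.id_apply, ev_smul, ev_rs _ _ _ hx, ev_rs _ _ _ hx, ev_smul]

theorem ev_RR (i : Fin 2) (f : BA) {x : Cn 2} (hx : x ∈ KK) :
    ev (RR i f) x = ev f (Function.update x i 0) := ev_rs i norm_zero_lt f hx

theorem dv0_mul (i : Fin 2) (f : BA) : XX i * dv i norm_zero_lt f = f - RR i f := by
  have := dv_mul i norm_zero_lt f
  rw [map_zero, sub_zero] at this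
  exact this

theorem XX_cancel (i : Fin 2) {f g : BA} (h : XX i * f = XX i * g) : f = g := by
  apply dv_unique i norm_zero_lt
  rw [map_zero, sub_zero]; exact h

/-- The backward shift in the variable `x i`. -/
def SS (i : Fin 2) : BA →ₗ[ℂ] BA where
  toFun := dv i norm_zero_lt
  map_add' := fun f g => by
    apply XX_cancel i
    rw [mul_add, dv0_mul, dv0_mul, dv0_mul, map_add]; ring
  map_smul' := fun c g => by
    apply XX_cancel i
    rw [RingHom.id_apply, mul_smul_comm, dv0_mul, dv0_mul, map_smul, smul_sub]

theorem XX_mul_SS (i : Fin 2) (f : BA) : XX i * SS i f = f - RR i f := dv0_mul i f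

theorem SS_norm (i : Fin 2) (f : BA) : ‖SS i f‖ ≤ 2 * ‖f‖ := by
  have := dv_norm_le i norm_zero_lt f
  rw [norm_zero, sub_zero, div_one] at this
  exact this

theorem RR_XX_mul (i : Fin 2) (f : BA) : RR i (XX i * f) = 0 := by
  apply BA_ext
  intro x hx
  have h := update_mem_KK hx i norm_zero_lt.le
  rw [ev_RR i _ hx, ev_mul, ev_XX i h, ev_zero]; simp

theorem RR_XX_mul' {i j : Fin 2} (hij : j ≠ i) (f : BA) : RR i (XX j * f) = XX j * RR i f := by
  apply BA_ext
  intro x hx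
  have h := update_mem_KK hx i norm_zero_lt.le
  rw [ev_RR i _ hx, ev_mul, ev_XX j h, ev_mul, ev_XX j hx, ev_RR i _ hx,
    Function.update_of_ne hij]

theorem RR_RR (i : Fin 2) (f : BA) : RR i (RR i f) = RR i f := by
  apply BA_ext
  intro x hx
  have h := update_mem_KK hx i norm_zero_lt.le
  rw [ev_RR i _ hx, ev_RR i _ h, ev_RR i _ hx]; simp

theorem RR_comm {i j : Fin 2} (hij : j ≠ i) (f : BA) : RR i (RR j f) = RR j (RR i f) := by
  apply BA_ext
  intro x hx
  have h := update_mem_KK hx i norm_zero_lt.le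
  have h' := update_mem_KK hx j norm_zero_lt.le
  rw [ev_RR i _ hx, ev_RR j _ h, ev_RR j _ hx, ev_RR i _ h', Function.update_comm hij]

theorem SS_XX (i : Fin 2) (f : BA) : SS i (XX i * f) = f := by
  apply XX_cancel i
  rw [XX_mul_SS, RR_XX_mul, sub_zero]

theorem SS_XX' {i j : Fin 2} (hij : j ≠ i) (f : BA) : SS i (XX j * f) = XX j * SS i f := by
  apply XX_cancel i
  rw [XX_mul_SS, RR_XX_mul' hij, mul_left_comm, XX_mul_SS]; ring

theorem SS_RR (i : Fin 2) (f : BA) : SS i (RR i f) = 0 := by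
  apply XX_cancel i
  rw [XX_mul_SS, RR_RR, sub_self, mul_zero]

theorem RR_SS {i j : Fin 2} (hij : j ≠ i) (f : BA) : RR j (SS i f) = SS i (RR j f) := by
  apply XX_cancel i
  rw [XX_mul_SS, ← RR_XX_mul' hij.symm, XX_mul_SS, map_sub, RR_comm hij]

theorem RR_SSpow {i j : Fin 2} (hij : j ≠ i) (n : ℕ) (f : BA) :
    RR j ((SS i ^ n) f) = (SS i ^ n) (RR j f) := by
  induction n generalizing f with
  | zero => simp
  | succ n ih => rw [pow_succ, Module.End.mul_apply, ih, RR_SS hij, Module.End.mul_apply]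

theorem SSpow_norm (i : Fin 2) (n : ℕ) (f : BA) : ‖(SS i ^ n) f‖ ≤ 2 ^ n * ‖f‖ := by
  induction n generalizing f with
  | zero => simp
  | succ n ih =>
    rw [pow_succ, Module.End.mul_apply]
    refine (ih _).trans ?_
    have := SS_norm i f
    calc (2:ℝ) ^ n * ‖SS i f‖ ≤ 2 ^ n * (2 * ‖f‖) := by gcongr
      _ = _ := by ring

theorem SSpow_XXpow (i : Fin 2) (n : ℕ) (f : BA) : (SS i ^ n) (XX i ^ n * f) = f := by
  induction n generalizing f with
  | zero => simp
  | succ n ih => rw [pow_succ, Module.End.mul_apply, pow_succ', mul_assoc, SS_XX, ih]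

theorem SSpow_XXpow' {i j : Fin 2} (hij : j ≠ i) (n m : ℕ) (f : BA) :
    (SS i ^ n) (XX j ^ m * f) = XX j ^ m * (SS i ^ n) f := by
  have h1 : ∀ f, (SS i ^ n) (XX j * f) = XX j * (SS i ^ n) f := by
    induction n with
    | zero => simp
    | succ n ih =>
      intro f
      rw [pow_succ, Module.End.mul_apply, SS_XX' hij, ih, Module.End.mul_apply]
  induction m generalizing f with
  | zero => simp
  | succ m ih => rw [pow_succ', mul_assoc, h1, ih, mul_assoc]

theorem SSpow_kill (i : Fin 2) {n m : ℕ} (h : m < n) {f : BA} (hf : RR i f = f) :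
    (SS i ^ n) (XX i ^ m * f) = 0 := by
  obtain ⟨k, rfl⟩ := Nat.exists_eq_add_of_lt h
  have : m + k + 1 = k + 1 + m := by ring
  rw [this, pow_add, Module.End.mul_apply, SSpow_XXpow, pow_succ, Module.End.mul_apply,
    ← hf, SS_RR, map_zero]

theorem expand (i : Fin 2) (n : ℕ) (f : BA) :
    f - XX i ^ n * (SS i ^ n) f = ∑ j ∈ Finset.range n, XX i ^ j * RR i ((SS i ^ j) f) := by
  induction n with
  | zero => simp
  | succ n ih =>
    rw [Finset.sum_range_succ, ← ih, pow_succ' (SS i), Module.End.mul_apply, pow_succ, mul_assoc,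
      XX_mul_SS]
    ring

theorem RR_XXpow {i j : Fin 2} (hij : j ≠ i) (m : ℕ) : RR i (XX j ^ m) = XX j ^ m := by
  induction m with
  | zero =>
    apply BA_ext
    intro x hx
    rw [ev_RR i _ hx, pow_zero, ev_one hx, ev_one (update_mem_KK hx i norm_zero_lt.le)]
  | succ m ih => rw [pow_succ', RR_XX_mul' hij, ih]

theorem RR_const (f : BA) : RR 0 (RR 1 f) = algebraMap ℂ BA (ev f 0) := by
  apply BA_ext
  intro x hx
  rw [ev_RR 0 _ hx, ev_RR 1 _ (update_mem_KK hx _ norm_zero_lt.le), ev_algebraMap hx]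
  congr 1
  ext i
  fin_cases i <;> simp

/-- Linear combinations of the basic monomials. -/
def Phi (a b : ℕ) : (Fin a × Fin b → ℂ) →ₗ[ℂ] BA :=
  Fintype.linearCombination ℂ (fun ij : Fin a × Fin b => XX 0 ^ (ij.1 : ℕ) * XX 1 ^ (ij.2 : ℕ))

theorem Phi_apply (a b : ℕ) (c : Fin a × Fin b → ℂ) :
    Phi a b c = ∑ ij, c ij • (XX 0 ^ (ij.1 : ℕ) * XX 1 ^ (ij.2 : ℕ)) := by
  simp [Phi, Fintype.linearCombination_apply]

theorem Phi_kill1 (a b : ℕ) (c : Fin a × Fin b → ℂ) : (SS 1 ^ b) (Phi a b c) = 0 := by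
  rw [Phi_apply, map_sum]
  refine Finset.sum_eq_zero fun ij _ => ?_
  rw [map_smul, mul_comm, SSpow_kill 1 ij.2.2 (RR_XXpow (by decide) _), smul_zero]

theorem Phi_kill0 (a b : ℕ) (c : Fin a × Fin b → ℂ) : (SS 0 ^ a) (Phi a b c) = 0 := by
  rw [Phi_apply, map_sum]
  refine Finset.sum_eq_zero fun ij _ => ?_
  rw [map_smul, SSpow_kill 0 ij.1.2 (RR_XXpow (by decide) _), smul_zero]

theorem Phi_range (a b : ℕ) (f : BA) : ∃ c,
    (f - XX 1 ^ b * (SS 1 ^ b) f) -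
      XX 0 ^ a * (SS 0 ^ a) (f - XX 1 ^ b * (SS 1 ^ b) f) = Phi a b c := by
  have key : ∀ h : BA, ∀ j : ℕ, ∃ d : Fin a → ℂ,
      XX 1 ^ j * RR 1 h - XX 0 ^ a * (SS 0 ^ a) (XX 1 ^ j * RR 1 h) =
        ∑ i : Fin a, d i • (XX 0 ^ (i : ℕ) * XX 1 ^ j) := by
    intro h j
    refine ⟨fun i => ev ((SS 0 ^ (i : ℕ)) h) 0, ?_⟩
    rw [SSpow_XXpow' (by decide), mul_left_comm, ← mul_sub, expand, Finset.mul_sum,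
      ← Fin.sum_univ_eq_sum_range (fun i => XX 1 ^ j * (XX 0 ^ i * RR 0 ((SS 0 ^ i) (RR 1 h)))) a]
    refine Finset.sum_congr rfl fun i _ => ?_
    rw [← RR_SSpow (by decide), RR_const, Algebra.smul_def]
    ring
  choose d hd using key
  rw [expand 1]
  refine ⟨fun ij => d ((SS 1 ^ (ij.2 : ℕ)) f) ij.2 ij.1, ?_⟩
  rw [map_sum, Finset.mul_sum, ← Finset.sum_sub_distrib, Phi_apply, Fintype.sum_prod_type_right,
    ← Fin.sum_univ_eq_sum_range (fun j => XX 1 ^ j * RR 1 ((SS 1 ^ j) f) -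
      XX 0 ^ a * (SS 0 ^ a) (XX 1 ^ j * RR 1 ((SS 1 ^ j) f))) b]
  exact Finset.sum_congr rfl fun j _ => hd _ _

theorem zero_mem_KK : (0 : Cn 2) ∈ KK := by simp

theorem SSpow_XXpow_ev (i : Fin 2) {n m : ℕ} {f : BA} (hf : RR i f = f) :
    RR i ((SS i ^ n) (XX i ^ m * f)) = if m = n then f else 0 := by
  rcases lt_trichotomy m n with h | h | h
  · rw [SSpow_kill i h hf, if_neg h.ne, map_zero]
  · subst h; rw [SSpow_XXpow, if_pos rfl, hf]
  · rw [if_neg h.ne']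
    obtain ⟨k, rfl⟩ := Nat.exists_eq_add_of_lt h
    rw [add_assoc, pow_add, mul_assoc, SSpow_XXpow, pow_succ', mul_assoc, RR_XX_mul]

theorem Phi_inj (a b : ℕ) {c : Fin a × Fin b → ℂ} (h : Phi a b c = 0) : c = 0 := by
  funext ⟨i, j⟩
  have h1 : RR 0 ((SS 0 ^ (i : ℕ)) (RR 1 ((SS 1 ^ (j : ℕ)) (Phi a b c)))) =
      algebraMap ℂ BA (c (i, j)) := by
    rw [Phi_apply]
    simp only [map_sum, map_smul]
    rw [Finset.sum_eq_single (i, j)]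
    · rw [mul_comm, SSpow_XXpow_ev 1 (RR_XXpow (by decide) _), if_pos rfl]
      have h1 := SSpow_XXpow_ev 0 (n := i) (m := i) (f := 1) (by
        simpa using RR_XXpow (i := 0) (j := 1) (by decide) 0)
      rw [mul_one, if_pos rfl] at h1
      rw [h1, Algebra.smul_def, mul_one]
    · rintro ⟨i', j'⟩ _ hne
      rw [mul_comm, SSpow_XXpow_ev 1 (RR_XXpow (by decide) _)]
      by_cases hj : (j' : ℕ) = j
      · rw [if_pos hj]
        have hi : (i' : ℕ) ≠ i := by
          intro hi; exact hne (Prod.ext (Fin.ext hi) (Fin.ext hj))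
        have h1 := SSpow_XXpow_ev 0 (n := i) (m := i') (f := 1) (by
          simpa using RR_XXpow (i := 0) (j := 1) (by decide) 0)
        rw [mul_one, if_neg hi] at h1
        rw [h1, smul_zero]
      · rw [if_neg hj]; simp
    · simp
  rw [h] at h1
  have h2 := congrArg (fun f => ev f 0) h1
  simp only [map_zero, ev_zero, ev_algebraMap zero_mem_KK] at h2
  exact h2.symm

theorem bij_of_small (E : BA →ₗ[ℂ] BA) {c : ℝ} (hc : c < 1) (hc0 : 0 ≤ c)
    (hE : ∀ f, ‖E f‖ ≤ c * ‖f‖) :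
    Function.Bijective (fun f => f + E f) := by
  set T : BA →L[ℂ] BA := E.mkContinuous c hE
  have hT : ‖-T‖ < 1 := by
    rw [norm_neg]; exact (LinearMap.mkContinuous_norm_le _ hc0 _).trans_lt hc
  obtain ⟨u, hu⟩ := isUnit_one_sub_of_norm_lt_one hT
  have hu' : ∀ f, (u : BA →L[ℂ] BA) f = f + E f := by
    intro f; rw [hu]; simp [T]
  constructor
  · intro f g hfg
    have hfg' : (u : BA →L[ℂ] BA) f = (u : BA →L[ℂ] BA) g := by rw [hu', hu']; exact hfg
    have := congrArg (fun a => (↑u⁻¹ : BA →L[ℂ] BA) a) hfg'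
    simpa only [← mul_apply_eq_comp, Units.inv_mul, one_apply_eq_self]
      using this
  · intro f
    refine ⟨(↑u⁻¹ : BA →L[ℂ] BA) f, ?_⟩
    change (↑u⁻¹ : BA →L[ℂ] BA) f + E ((↑u⁻¹ : BA →L[ℂ] BA) f) = f
    rw [← hu', ← mul_apply_eq_comp, Units.mul_inv, one_apply_eq_self]

/-- Smallness constant. -/
def eta (a b : ℕ) : ℝ := 1 / (2 * (2 ^ b + 2 ^ a * (1 + 2 ^ b)))

theorem eta_pos (a b : ℕ) : 0 < eta a b := by unfold eta; positivity

theorem eta_mul (a b : ℕ) : eta a b * (2 ^ b + 2 ^ a * (1 + 2 ^ b)) = 1 / 2 := by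
  unfold eta; field_simp

theorem XXpow_norm (i : Fin 2) (n : ℕ) : ‖XX i ^ n‖ ≤ 1 := by
  have h1 : ‖XX i‖ ≤ 1 := BA_norm_le zero_le_one fun x hx => by
    rw [ev_XX i hx]; exact mem_KK.1 hx i
  exact (norm_pow_le _ _).trans (pow_le_one₀ (norm_nonneg _) h1)

/-- The perturbation term of the division operator. -/
def pert (a b : ℕ) (g0 g1 : BA) : BA →ₗ[ℂ] BA :=
  LinearMap.mulLeft ℂ (g0 - XX 1 ^ b) ∘ₗ (SS 1 ^ b) +
  LinearMap.mulLeft ℂ (g1 - XX 0 ^ a) ∘ₗ (SS 0 ^ a) ∘ₗ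
    (LinearMap.id - LinearMap.mulLeft ℂ (XX 1 ^ b) ∘ₗ (SS 1 ^ b))

theorem pert_apply (a b : ℕ) (g0 g1 f : BA) : pert a b g0 g1 f =
    (g0 - XX 1 ^ b) * (SS 1 ^ b) f +
    (g1 - XX 0 ^ a) * (SS 0 ^ a) (f - XX 1 ^ b * (SS 1 ^ b) f) := rfl

theorem pert_bij (a b : ℕ) {g0 g1 : BA} (h0 : ‖g0 - XX 1 ^ b‖ ≤ eta a b)
    (h1 : ‖g1 - XX 0 ^ a‖ ≤ eta a b) :
    Function.Bijective (fun f => f + pert a b g0 g1 f) := by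
  refine bij_of_small _ (c := 1 / 2) (by norm_num) (by norm_num) fun f => ?_
  rw [pert_apply]
  have hη := (eta_pos a b).le
  have hB := SSpow_norm 1 b f
  have n1 : ‖(g0 - XX 1 ^ b) * (SS 1 ^ b) f‖ ≤ eta a b * (2 ^ b * ‖f‖) :=
    (norm_mul_le _ _).trans (by gcongr)
  have n2 : ‖XX 1 ^ b * (SS 1 ^ b) f‖ ≤ 1 * (2 ^ b * ‖f‖) :=
    (norm_mul_le _ _).trans (by gcongr; exact XXpow_norm 1 b)
  have n3 : ‖f - XX 1 ^ b * (SS 1 ^ b) f‖ ≤ (1 + 2 ^ b) * ‖f‖ := by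
    refine (norm_sub_le _ _).trans ?_
    linarith
  have n4 := SSpow_norm 0 a (f - XX 1 ^ b * (SS 1 ^ b) f)
  have n5 : ‖(SS 0 ^ a) (f - XX 1 ^ b * (SS 1 ^ b) f)‖ ≤ 2 ^ a * ((1 + 2 ^ b) * ‖f‖) :=
    n4.trans (by gcongr)
  have n6 : ‖(g1 - XX 0 ^ a) * (SS 0 ^ a) (f - XX 1 ^ b * (SS 1 ^ b) f)‖ ≤
      eta a b * (2 ^ a * ((1 + 2 ^ b) * ‖f‖)) :=
    (norm_mul_le _ _).trans (by gcongr)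
  refine (norm_add_le _ _).trans ((add_le_add n1 n6).trans (le_of_eq ?_))
  rw [← eta_mul a b]; ring

/-- Division: every element is a combination of basic monomials modulo `g0, g1`. -/
theorem division (a b : ℕ) {g0 g1 : BA} (h0 : ‖g0 - XX 1 ^ b‖ ≤ eta a b)
    (h1 : ‖g1 - XX 0 ^ a‖ ≤ eta a b) (f : BA) :
    ∃ c u v, f = Phi a b c + g0 * u + g1 * v := by
  obtain ⟨t, ht⟩ := (pert_bij a b h0 h1).2 f
  obtain ⟨c, hc⟩ := Phi_range a b t
  refine ⟨c, (SS 1 ^ b) t, (SS 0 ^ a) (t - XX 1 ^ b * (SS 1 ^ b) t), ?_⟩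
  rw [← hc, ← ht]
  simp only [pert_apply]
  ring

theorem division_unique (a b : ℕ) {g0 g1 : BA} (h0 : ‖g0 - XX 1 ^ b‖ ≤ eta a b)
    (h1 : ‖g1 - XX 0 ^ a‖ ≤ eta a b) {c : Fin a × Fin b → ℂ} {u v : BA}
    (h : Phi a b c = g0 * u + g1 * v) : c = 0 := by
  have hη := (eta_pos a b).le
  obtain ⟨w, hw⟩ := (bij_of_small ((SS 1 ^ b) ∘ₗ LinearMap.mulLeft ℂ (g0 - XX 1 ^ b)) (c := 1 / 2)
    (by norm_num) (by norm_num) (fun f => by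
      change ‖(SS 1 ^ b) ((g0 - XX 1 ^ b) * f)‖ ≤ _
      refine (SSpow_norm _ _ _).trans ?_
      calc (2:ℝ) ^ b * ‖(g0 - XX 1 ^ b) * f‖ ≤ 2 ^ b * (eta a b * ‖f‖) := by
            gcongr; exact (norm_mul_le _ _).trans (by gcongr)
        _ = (eta a b * 2 ^ b) * ‖f‖ := by ring
        _ ≤ 1 / 2 * ‖f‖ := by
          rw [← eta_mul a b]
          gcongr
          have : (0:ℝ) ≤ 2 ^ a * (1 + 2 ^ b) := by positivity
          linarith)).2 ((SS 1 ^ b) v)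
  have hw : w + (SS 1 ^ b) ((g0 - XX 1 ^ b) * w) = (SS 1 ^ b) v := hw
  have hw' : (SS 1 ^ b) (g0 * w) = (SS 1 ^ b) v := by
    rw [← hw]
    nth_rewrite 2 [← SSpow_XXpow 1 b w]
    rw [← map_add]; congr 1; ring
  set v' := v - g0 * w with hv'
  set u' := u + g1 * w with hu'
  have hBv : (SS 1 ^ b) v' = 0 := by rw [hv', map_sub, hw', sub_self]
  have hP : Phi a b c = g0 * u' + g1 * v' := by rw [h, hv', hu']; ring
  set f := Phi a b c - XX 1 ^ b * u' - XX 0 ^ a * v' with hf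
  have hBf : (SS 1 ^ b) f = -u' := by
    rw [hf, map_sub, map_sub, Phi_kill1, SSpow_XXpow, SSpow_XXpow' (by decide), hBv]; ring
  have hPf : f - XX 1 ^ b * (SS 1 ^ b) f = Phi a b c - XX 0 ^ a * v' := by
    rw [hBf, hf]; ring
  have hCf : (SS 0 ^ a) (f - XX 1 ^ b * (SS 1 ^ b) f) = -v' := by
    rw [hPf, map_sub, Phi_kill0, SSpow_XXpow]; ring
  have hT : f + pert a b g0 g1 f = 0 := by
    rw [pert_apply, hCf, hBf, hf, hP]; ring
  have hf0 : f = 0 := (pert_bij a b h0 h1).1 (by simpa using hT)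
  apply Phi_inj a b
  have hv0 : v' = 0 := by
    have := hCf; rw [hf0] at this; simpa using this.symm
  have hu0 : u' = 0 := by
    have := hBf; rw [hf0] at this; simpa using this.symm
  rw [hP, hv0, hu0]; simp

/-- Evaluation at a point as a monoid homomorphism. -/
def evHom (p : KK) : BA →* ℂ where
  toFun f := ev f p
  map_one' := ev_one p.2
  map_mul' f g := ev_mul f g p

theorem evHom_injective : Function.Injective evHom := by
  intro p q h
  apply Subtype.ext
  funext i
  have := DFunLike.congr_fun h (XX i)
  change ev (XX i) p = ev (XX i) q at this
  rwa [ev_XX i p.2, ev_XX i q.2] at this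

/-- Evaluation at a point as a linear map. -/
def evLin (p : Cn 2) : BA →ₗ[ℂ] ℂ where
  toFun f := ev f p
  map_add' f g := ev_add f g p
  map_smul' c f := by rw [ev_smul]; rfl

/-- Membership in the maximal ideal of a point. -/
theorem point_ideal {p : Cn 2} (hp : ∀ i, ‖p i‖ < 1) (f : BA) :
    ∃ u w : BA, f = algebraMap ℂ BA (ev f p) + (XX 0 - algebraMap ℂ BA (p 0)) * u +
      (XX 1 - algebraMap ℂ BA (p 1)) * w := by
  refine ⟨dv 0 (hp 0) f, dv 1 (hp 1) (rs 0 (hp 0) f), ?_⟩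
  rw [dv_mul, dv_mul]
  have : rs 1 (hp 1) (rs 0 (hp 0) f) = algebraMap ℂ BA (ev f p) := by
    apply BA_ext
    intro x hx
    rw [ev_rs _ _ _ hx, ev_rs _ _ _ (update_mem_KK hx 1 (hp 1).le), ev_algebraMap hx]
    congr 1
    funext i
    fin_cases i <;> simp
  rw [this]; ring

theorem card_le_aux (a b : ℕ) {g0 g1 : BA} (h0 : ‖g0 - XX 1 ^ b‖ ≤ eta a b)
    (h1 : ‖g1 - XX 0 ^ a‖ ≤ eta a b) (t : Finset KK)
    (ht : ∀ p ∈ t, ev g0 p = 0 ∧ ev g1 p = 0) : t.card ≤ a * b := by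
  have hli : LinearIndependent ℂ
      (fun p : t => (evLin p.1.1 ∘ₗ Phi a b : (Fin a × Fin b → ℂ) →ₗ[ℂ] ℂ)) := by
    rw [Fintype.linearIndependent_iff]
    intro c hc
    have hD := linearIndependent_monoidHom BA ℂ
    have hD' : LinearIndependent ℂ (fun p : t => (evHom p.1 : BA → ℂ)) :=
      hD.comp (fun p : t => evHom p.1) (fun p q h => Subtype.ext (evHom_injective h))
    rw [Fintype.linearIndependent_iff] at hD'
    refine hD' c ?_
    funext f
    obtain ⟨d, u, v, rfl⟩ := division a b h0 h1 f
    have := LinearMap.congr_fun hc d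
    simp only [LinearMap.sum_apply, LinearMap.smul_apply, LinearMap.comp_apply,
      LinearMap.zero_apply] at this
    simp only [Finset.sum_apply, Pi.smul_apply, Pi.zero_apply]
    rw [← this]
    refine Finset.sum_congr rfl fun p _ => ?_
    congr 1
    change ev _ p.1 = ev _ p.1
    obtain ⟨z0, z1⟩ := ht p.1 p.2
    rw [ev_add, ev_add, ev_mul, ev_mul, z0, z1]; ring
  have := hli.fintype_card_le_finrank
  simpa using this

theorem card_ge_aux (a b : ℕ) (ha : a ≠ 0) (hb : b ≠ 0) {g0 g1 : BA}
    (h0 : ‖g0 - XX 1 ^ b‖ ≤ eta a b)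
    (h1 : ‖g1 - XX 0 ^ a‖ ≤ eta a b) (t : Finset KK)
    (ht : ∀ p : KK, ev g0 p = 0 → ev g1 p = 0 → p ∈ t)
    (hreg : ∀ p : KK, (∀ i, ‖p.1 i‖ < 1) → ev g0 p = 0 → ev g1 p = 0 →
      ∃ δ : BA, ev δ p ≠ 0 ∧ ∀ i, δ * (XX i - algebraMap ℂ BA (p.1 i)) ∈ Ideal.span {g0, g1}) :
    a * b ≤ t.card := by
  have hη : eta a b < 1 := by
    have h1 := eta_mul a b
    have h2 := eta_pos a b
    have h3 : (1:ℝ) ≤ 2 ^ b := one_le_pow₀ (by norm_num)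
    have h4 : (1:ℝ) ≤ 2 ^ a := one_le_pow₀ (by norm_num)
    nlinarith [mul_pos h2 (show (0:ℝ) < 2 ^ a * (1 + 2 ^ b) by positivity)]
  -- functions vanishing on the zero set lie in the ideal
  have key : ∀ f : BA, (∀ p ∈ t, ev f p = 0) → f ∈ Ideal.span {g0, g1} := by
    intro f hf
    by_contra hcon
    set I := Ideal.span ({g0, g1} : Set BA) with hI
    set J : Ideal BA := Submodule.comap (LinearMap.mulRight BA f) I with hJ
    have memJ : ∀ x, x ∈ J ↔ x * f ∈ I := fun x => Iff.rfl
    have hJne : J ≠ ⊤ := by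
      rw [Ideal.ne_top_iff_one, memJ, one_mul]; exact hcon
    obtain ⟨m, hm, hJm⟩ := Ideal.exists_le_maximal J hJne
    have hIJ : I ≤ J := fun x hx => (memJ x).2 (I.mul_mem_right _ hx)
    set χ := m.toCharacterSpace with hχ
    have χm : ∀ x ∈ m, χ x = 0 := fun x hx => m.toCharacterSpace_apply_eq_zero_of_mem hx
    have hg0 : χ g0 = 0 := χm _ (hJm (hIJ (Ideal.subset_span (by simp))))
    have hg1 : χ g1 = 0 := χm _ (hJm (hIJ (Ideal.subset_span (by simp))))
    set p : Cn 2 := fun i => χ (XX i) with hp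
    have bd : ∀ (g : BA) (i : Fin 2) (n : ℕ), n ≠ 0 → χ g = 0 → ‖g - XX i ^ n‖ ≤ eta a b →
        ‖p i‖ < 1 := by
      intro g i n hn hg hle
      have e1 : χ (g - XX i ^ n) = -(p i) ^ n := by
        rw [map_sub, hg, map_pow]; ring
      have e2 := AlgHom.norm_apply_le_self χ (g - XX i ^ n)
      rw [e1, norm_neg, norm_pow] at e2
      have : ‖p i‖ ^ n < 1 := e2.trans_lt (hle.trans_lt hη)
      exact (pow_lt_one_iff_of_nonneg (norm_nonneg _) hn).1 this
    have hpi : ∀ i, ‖p i‖ < 1 := by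
      intro i
      fin_cases i
      · exact bd g1 0 a ha hg1 h1
      · exact bd g0 1 b hb hg0 h0
    have hpK : p ∈ KK := mem_KK.2 fun i => (hpi i).le
    have χalg : ∀ c : ℂ, χ (algebraMap ℂ BA c) = c := fun c => by
      simpa using AlgHomClass.commutes χ c
    have hev : ∀ x, χ x = ev x p := by
      intro x
      obtain ⟨u, w, huw⟩ := point_ideal hpi x
      have : χ x = ev x p + (χ (XX 0) - p 0) * χ u + (χ (XX 1) - p 1) * χ w := by
        conv_lhs => rw [huw]
        rw [map_add, map_add, map_mul, map_mul, map_sub, map_sub, χalg, χalg, χalg]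
      rw [this]; simp [hp]
    have z0 : ev g0 p = 0 := by rw [← hev, hg0]
    have z1 : ev g1 p = 0 := by rw [← hev, hg1]
    have hfp : ev f p = 0 := hf ⟨p, hpK⟩ (ht _ z0 z1)
    obtain ⟨δ, hδ, hδm⟩ := hreg ⟨p, hpK⟩ hpi z0 z1
    have : δ ∈ J := by
      rw [memJ]
      obtain ⟨u, w, huw⟩ := point_ideal hpi f
      rw [huw, hfp, map_zero, zero_add, mul_add, ← mul_assoc, ← mul_assoc]
      exact I.add_mem (I.mul_mem_right _ (hδm 0)) (I.mul_mem_right _ (hδm 1))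
    have h3 := χm _ (hJm this)
    rw [hev] at h3
    exact hδ h3
  let Ψ : (Fin a × Fin b → ℂ) →ₗ[ℂ] (t → ℂ) :=
    LinearMap.pi fun p : t => evLin p.1.1 ∘ₗ Phi a b
  have hinj : Function.Injective Ψ := by
    rw [← LinearMap.ker_eq_bot, LinearMap.ker_eq_bot']
    intro c hc
    have : Phi a b c ∈ Ideal.span {g0, g1} := by
      apply key
      intro p hp
      exact congrFun hc ⟨p, hp⟩
    obtain ⟨u, v, huv⟩ := Ideal.mem_span_pair.1 this
    exact division_unique a b h0 h1 (u := u) (v := v) (by rw [← huv]; ring)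
  have := LinearMap.finrank_le_finrank_of_injective hinj
  simpa using this

theorem slice_diff {F : Cn 2 → ℂ} (hF : ∀ x ∈ KK, DifferentiableAt ℂ F x) (x : Cn 2) (hx : x ∈ KK)
    (i : Fin 2) : DifferentiableOn ℂ (fun z => F (Function.update x i z)) (ball 0 1) := by
  intro z hz
  have hz' : ‖z‖ ≤ 1 := by simpa using (mem_ball_zero_iff.1 hz).le
  have h1 : DifferentiableAt ℂ (fun z => Function.update x i z) z :=
    (hasFDerivAt_update x z).differentiableAt
  exact (DifferentiableAt.comp z (hF _ (update_mem_KK hx i hz')) h1).differentiableWithinAt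

/-- The derivative of `(x₀-p₀) u + (x₁-p₁) w` at `p` for continuous `u, w`. -/
theorem fderiv_aux {F : Cn 2 → ℂ} {p : Cn 2} (hp : ∀ i, ‖p i‖ < 1)
    (hF : DifferentiableAt ℂ F p) (u w : BA)
    (h : ∀ x ∈ KK, F x = (x 0 - p 0) * ev u x + (x 1 - p 1) * ev w x) (y : Cn 2) :
    fderiv ℂ F p y = y 0 * ev u p + y 1 * ev w p := by
  have hpK : KK ∈ 𝓝 p := by
    refine mem_of_superset (isOpen_ball.mem_nhds (?_ : p ∈ ball (0 : Cn 2) 1)) ball_subset_closedBall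
    rw [mem_ball_zero_iff, pi_norm_lt_iff one_pos]; exact hp
  have hu := (ev_continuousOn u).continuousAt hpK
  have hw := (ev_continuousOn w).continuousAt hpK
  have hc : ∀ (i : Fin 2) (v : BA), ContinuousAt (ev v) p →
      HasFDerivAt (fun x : Cn 2 => (x i - p i) * ev v x)
        (ev v p • (ContinuousLinearMap.proj i : Cn 2 →L[ℂ] ℂ)) p := by
    intro i v hv
    rw [hasFDerivAt_iff_isLittleO]
    have e : (fun x : Cn 2 => (x i - p i) * ev v x - (p i - p i) * ev v p -
        (ev v p • (ContinuousLinearMap.proj i : Cn 2 →L[ℂ] ℂ)) (x - p)) =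
        fun x => (x i - p i) * (ev v x - ev v p) := by
      funext x; simp; ring
    rw [e]
    have o1 : (fun x : Cn 2 => x i - p i) =O[𝓝 p] fun x => x - p :=
      IsBigO.of_bound 1 (Eventually.of_forall fun x => by
        rw [one_mul]; exact norm_le_pi_norm (x - p) i)
    have o2 : (fun x : Cn 2 => ev v x - ev v p) =o[𝓝 p] fun _ => (1 : ℝ) := by
      rw [isLittleO_one_iff]
      exact tendsto_sub_nhds_zero_iff.2 hv
    have := o1.norm_right.mul_isLittleO o2
    simp only [mul_one] at this
    exact this.of_norm_right
  have hs := ((hc 0 u hu).add (hc 1 w hw))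
  have : HasFDerivAt F _ p := hs.congr_of_eventuallyEq
    (by filter_upwards [hpK] with x hx; rw [h x hx]; rfl)
  rw [this.fderiv]
  simp [mul_comm]

theorem abstract_count (a b : ℕ) (ha : a ≠ 0) (hb : b ≠ 0) (g : Cn 2 → Cn 2)
    (hd : ∀ x ∈ KK, DifferentiableAt ℂ g x)
    (h0 : ∀ x ∈ KK, ‖g x 0 - x 1 ^ b‖ ≤ eta a b)
    (h1 : ∀ x ∈ KK, ‖g x 1 - x 0 ^ a‖ ≤ eta a b) :
    {x ∈ KK | g x = 0}.Finite ∧ {x ∈ KK | g x = 0}.ncard ≤ a * b ∧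
    ((∀ x ∈ KK, g x = 0 → Function.Bijective (fderiv ℂ g x)) →
      {x ∈ KK | g x = 0}.ncard = a * b) := by
  have hdi : ∀ i, ∀ x ∈ KK, DifferentiableAt ℂ (fun x => g x i) x := fun i x hx =>
    differentiableAt_pi.1 (hd x hx) i
  have hci : ∀ i, ContinuousOn (fun x => g x i) KK := fun i x hx =>
    (hdi i x hx).continuousAt.continuousWithinAt
  let G : Fin 2 → BA := fun i => mkBA (fun x => g x i) (hci i) (slice_diff (hdi i))
  have hG : ∀ i, ∀ x ∈ KK, ev (G i) x = g x i := fun i x hx => ev_mkBA hx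
  have evpow : ∀ i n, ∀ x ∈ KK, ev (XX i ^ n) x = x i ^ n := by
    intro i n x hx
    have := map_pow (evHom ⟨x, hx⟩) (XX i) n
    change ev (XX i ^ n) x = (ev (XX i) x) ^ n at this
    rw [this, ev_XX i hx]
  have H0 : ‖G 0 - XX 1 ^ b‖ ≤ eta a b := BA_norm_le (eta_pos a b).le fun x hx => by
    rw [ev_sub, hG 0 x hx, evpow 1 b x hx]; exact h0 x hx
  have H1 : ‖G 1 - XX 0 ^ a‖ ≤ eta a b := BA_norm_le (eta_pos a b).le fun x hx => by
    rw [ev_sub, hG 1 x hx, evpow 0 a x hx]; exact h1 x hx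
  set Z : Set KK := {p | g p = 0} with hZ
  have hZ0 : ∀ p ∈ Z, ev (G 0) p = 0 ∧ ev (G 1) p = 0 := by
    intro p hp
    rw [hG 0 p p.2, hG 1 p p.2, show g p = 0 from hp]; simp
  have hZfin : Z.Finite := by
    by_contra hinf
    obtain ⟨t, ht, htc⟩ := Set.Infinite.exists_subset_card_eq hinf (a * b + 1)
    have := card_le_aux a b H0 H1 t (fun p hp => hZ0 p (ht hp))
    omega
  have himg : {x ∈ KK | g x = 0} = Subtype.val '' Z := by
    ext x; constructor
    · rintro ⟨hx, hx0⟩; exact ⟨⟨x, hx⟩, hx0, rfl⟩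
    · rintro ⟨p, hp, rfl⟩; exact ⟨p.2, hp⟩
  have hcard : {x ∈ KK | g x = 0}.ncard = hZfin.toFinset.card := by
    rw [himg, Set.ncard_image_of_injective _ Subtype.val_injective,
      Set.ncard_eq_toFinset_card _ hZfin]
  have hle : hZfin.toFinset.card ≤ a * b :=
    card_le_aux a b H0 H1 _ (fun p hp => hZ0 p (by simpa using hp))
  refine ⟨by rw [himg]; exact hZfin.image _, hcard ▸ hle, fun hreg => ?_⟩
  rw [hcard]
  refine le_antisymm hle ?_
  refine card_ge_aux a b ha hb H0 H1 _ ?_ ?_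
  · intro p z0 z1
    rw [hG 0 p p.2] at z0
    rw [hG 1 p p.2] at z1
    simp only [Set.Finite.mem_toFinset, hZ, Set.mem_ofPred_eq]
    funext i; fin_cases i
    · exact z0
    · exact z1
  · intro p hp z0 z1
    have hgp : g p = 0 := by
      rw [hG 0 p p.2] at z0
      rw [hG 1 p p.2] at z1
      funext i; fin_cases i
      · exact z0
      · exact z1
    obtain ⟨u0, w0, e0⟩ := point_ideal hp (G 0)
    obtain ⟨u1, w1, e1⟩ := point_ideal hp (G 1)
    rw [z0, map_zero, zero_add] at e0
    rw [z1, map_zero, zero_add] at e1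
    refine ⟨u0 * w1 - u1 * w0, ?_, ?_⟩
    · intro hdet
      rw [ev_sub, ev_mul, ev_mul] at hdet
      have form : ∀ (i : Fin 2) (u w : BA), G i = (XX 0 - algebraMap ℂ BA (p.1 0)) * u +
          (XX 1 - algebraMap ℂ BA (p.1 1)) * w →
          ∀ y, fderiv ℂ g p.1 y i = y 0 * ev u p + y 1 * ev w p := by
        intro i u w e y
        have h1 := fderiv_aux (F := fun x => g x i) hp (hdi i p p.2) u w (by
          intro x hx
          rw [← hG i x hx, e, ev_add, ev_mul, ev_mul, ev_sub, ev_sub, ev_XX 0 hx, ev_XX 1 hx,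
            ev_algebraMap hx, ev_algebraMap hx]) y
        rw [← h1]
        have := (hasFDerivAt_pi'.1 (hd p p.2).hasFDerivAt i).fderiv
        rw [this]; rfl
      have f0 := form 0 u0 w0 e0
      have f1 := form 1 u1 w1 e1
      have inj := (hreg p p.2 hgp).1
      have kill : ∀ y : Cn 2, y 0 * ev u0 p + y 1 * ev w0 p = 0 →
          y 0 * ev u1 p + y 1 * ev w1 p = 0 → y = 0 := by
        intro y k0 k1
        apply inj
        rw [map_zero]
        funext i; fin_cases i
        · exact (f0 y).trans k0
        · exact (f1 y).trans k1
      have A := kill ![ev w1 p, - ev u1 p] (by simp; linear_combination hdet) (by simp; ring)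
      have B := kill ![- ev w0 p, ev u0 p] (by simp; ring) (by simp; linear_combination hdet)
      have A0 := congrFun A 0
      have A1 := congrFun A 1
      have B0 := congrFun B 0
      have B1 := congrFun B 1
      simp at A0 A1 B0 B1
      have C := kill ![1, 0] (by simp [B1]) (by simp [A1])
      have := congrFun C 0
      simp at this
    · intro i
      rw [Ideal.mem_span_pair]
      fin_cases i
      · refine ⟨w1, -w0, ?_⟩
        rw [e0, e1]; simp only [Fin.zero_eta]; ring
      · refine ⟨-u1, u0, ?_⟩
        rw [e0, e1]; simp only [Fin.mk_one]; ring


theorem sard {m : ℕ} (h : Cn m → Cn m) (p : Cn m) (r : ℝ)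
    (hd : ∀ x ∈ ball p r, DifferentiableAt ℂ h x) :
    ∀ ε > 0, ∃ q : Cn m, ‖q‖ < ε ∧ IsRegularValueOn h (ball p r) q := by
  intro ε hε
  set s : Set (Cn m) := {x | x ∈ ball p r ∧ ¬ Function.Bijective (fderiv ℂ h x)} with hs
  have key : MeasureTheory.volume (h '' s) = 0 := by
    apply MeasureTheory.addHaar_image_eq_zero_of_det_fderivWithin_eq_zero
      (f' := fun x => (fderiv ℂ h x).restrictScalars ℝ)
    · intro x hx
      exact ((hd x hx.1).hasFDerivAt.restrictScalars ℝ).hasFDerivWithinAt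
    · intro x hx
      by_contra hne
      apply hx.2
      have hinj : Function.Injective (fderiv ℂ h x) := by
        have : LinearMap.ker (((fderiv ℂ h x).restrictScalars ℝ : Cn m →L[ℝ] Cn m) :
            Cn m →ₗ[ℝ] Cn m) = ⊥ := by
          by_contra hk
          exact hne (LinearMap.det_eq_zero_iff_ker_ne_bot.2 hk)
        have hi := LinearMap.ker_eq_bot.1 this
        intro u w huw
        exact hi huw
      exact ⟨hinj, (LinearMap.injective_iff_surjective (f := (fderiv ℂ h x).toLinearMap)).1 hinj⟩
  have : ∃ q ∈ ball (0 : Cn m) ε, q ∉ h '' s := by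
    by_contra hc
    push Not at hc
    have h1 : MeasureTheory.volume (ball (0 : Cn m) ε) = 0 :=
      MeasureTheory.measure_mono_null hc key
    exact (measure_ball_pos MeasureTheory.volume (0 : Cn m) hε).ne' h1
  obtain ⟨q, hq, hq'⟩ := this
  refine ⟨q, by simpa using hq, fun x hx hxq => ?_⟩
  by_contra hb
  exact hq' ⟨x, ⟨hx, hb⟩, hxq⟩

theorem zeroOrder_unique_aux {m : ℕ} {h : Cn m → Cn m} {p : Cn m} {a b : ℕ} {r r' : ℝ}
    (hrr : r ≤ r')
    (hc : ContinuousOn h (closedBall p r')) (hr : 0 < r)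
    (hz : ∀ x ∈ closedBall p r', h x = 0 → x = p)
    (hreg : ∀ ε > 0, ∃ q : Cn m, ‖q‖ < ε ∧ IsRegularValueOn h (ball p r') q)
    (ha : ∃ δ > 0, ∀ q : Cn m, ‖q‖ < δ → IsRegularValueOn h (ball p r) q →
      {x ∈ ball p r | h x = q}.ncard = a)
    (hb : ∃ δ > 0, ∀ q : Cn m, ‖q‖ < δ → IsRegularValueOn h (ball p r') q →
      {x ∈ ball p r' | h x = q}.ncard = b) : a = b := by
  obtain ⟨δ, hδ, hA⟩ := ha
  obtain ⟨δ', hδ', hB⟩ := hb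
  have hK : IsCompact (closedBall p r' \ ball p r) :=
    (isCompact_closedBall p r').diff isOpen_ball
  obtain ⟨c, hc0, hcb⟩ : ∃ c > 0, ∀ x ∈ closedBall p r' \ ball p r, c ≤ ‖h x‖ := by
    rcases (closedBall p r' \ ball p r).eq_empty_or_nonempty with he | hne
    · exact ⟨1, one_pos, fun x hx => by rw [he] at hx; exact hx.elim⟩
    · obtain ⟨y, hy, hmin⟩ := hK.exists_isMinOn hne ((hc.mono sdiff_subset).norm)
      refine ⟨‖h y‖, norm_pos_iff.2 fun h0 => ?_, fun x hx => hmin hx⟩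
      have := hz y hy.1 h0
      apply hy.2
      rw [this]; exact mem_ball_self hr
  obtain ⟨q, hq, hqr⟩ := hreg (min δ (min δ' c)) (by positivity)
  have q1 := hq.trans_le (min_le_left _ _)
  have q2 := hq.trans_le ((min_le_right _ _).trans (min_le_left _ _))
  have q3 := hq.trans_le ((min_le_right _ _).trans (min_le_right _ _))
  have hsub : ball p r ⊆ ball p r' := ball_subset_ball hrr
  rw [← hA q q1 (fun x hx => hqr x (hsub hx)), ← hB q q2 hqr]
  congr 1
  ext x
  constructor
  · rintro ⟨h1, h2⟩; exact ⟨hsub h1, h2⟩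
  · rintro ⟨h1, h2⟩
    refine ⟨?_, h2⟩
    by_contra hx
    have := hcb x ⟨ball_subset_closedBall h1, hx⟩
    rw [h2] at this
    linarith

theorem HasZeroOrder.unique {m : ℕ} {h : Cn m → Cn m} {p : Cn m} {a b : ℕ}
    (ha : HasZeroOrder h p a) (hb : HasZeroOrder h p b) : a = b := by
  obtain ⟨r, hr, an, h0, hz, hreg, hcnt⟩ := ha
  obtain ⟨r', hr', an', h0', hz', hreg', hcnt'⟩ := hb
  rcases le_total r r' with h | h
  · exact zeroOrder_unique_aux h an'.continuousOn hr hz' hreg' hcnt hcnt'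
  · exact (zeroOrder_unique_aux h an.continuousOn hr' hz hreg hcnt' hcnt).symm

theorem HasZeroOrder.zeroOrder_eq {m : ℕ} {h : Cn m → Cn m} {p : Cn m} {a : ℕ}
    (ha : HasZeroOrder h p a) : zeroOrder h p = a := by
  have : {k | HasZeroOrder h p k} = {a} := by
    ext k
    exact ⟨fun hk => HasZeroOrder.unique hk ha, fun hk => by rw [mem_singleton_iff.1 hk]; exact ha⟩
  rw [zeroOrder, this, csInf_singleton]

theorem HasZeroOrder.isolated {m : ℕ} {g : Cn m → Cn m} {a : ℕ}
    (ha : HasZeroOrder (fun x => x - g x) 0 a) : IsolatedFixedPtAt0 g := by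
  obtain ⟨r, hr, an, h0, hz, -⟩ := ha
  refine ⟨by simpa using h0, ?_⟩
  rw [eventually_nhdsWithin_iff]
  filter_upwards [closedBall_mem_nhds (0 : Cn m) hr] with x hx hne hfix
  exact hne (hz x hx (by simp [hfix]))

theorem hasZeroOrder_simple {m : ℕ} {h : Cn m → Cn m} (han : ∀ x, AnalyticAt ℂ h x)
    (h0 : h 0 = 0) (hbij : Function.Bijective (fderiv ℂ h 0)) : HasZeroOrder h 0 1 := by
  let e : Cn m ≃L[ℂ] Cn m := ContinuousLinearEquiv.ofBijective (fderiv ℂ h 0)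
    (LinearMap.ker_eq_bot.2 hbij.1) (LinearMap.range_eq_top.2 hbij.2)
  have hs : HasStrictFDerivAt h (e : Cn m →L[ℂ] Cn m) 0 := by
    have : (e : Cn m →L[ℂ] Cn m) = fderiv ℂ h 0 := by ext x; rfl
    rw [this]
    exact (han 0).hasStrictFDerivAt
  set φ := hs.toOpenPartialHomeomorph h with hφ
  have hcoe : (φ : Cn m → Cn m) = h := hs.toOpenPartialHomeomorph_coe
  have hsrc : φ.source ∈ 𝓝 (0 : Cn m) :=
    φ.open_source.mem_nhds hs.mem_toOpenPartialHomeomorph_source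
  obtain ⟨r, hr, hball⟩ := Metric.nhds_basis_closedBall.mem_iff.1 hsrc
  have hinj : InjOn h (closedBall 0 r) := by
    have := φ.injOn.mono hball
    rwa [hcoe] at this
  refine ⟨r, hr, fun x _ => han x, h0, ?_, ?_, ?_⟩
  · intro x hx hx0
    exact hinj hx (mem_closedBall_self hr.le) (hx0.trans h0.symm)
  · exact sard h 0 r (fun x _ => (han x).differentiableAt)
  · have him : h '' ball 0 r ∈ 𝓝 (0 : Cn m) := by
      have := hs.map_nhds_eq_of_equiv
      rw [h0] at this
      rw [← this]
      exact image_mem_map (ball_mem_nhds _ hr)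
    obtain ⟨δ, hδ, hsub⟩ := Metric.mem_nhds_iff.1 him
    refine ⟨δ, hδ, fun q hq _ => ?_⟩
    obtain ⟨x, hx, hxq⟩ := hsub (by simpa using hq : q ∈ ball 0 δ)
    rw [Set.ncard_eq_one]
    refine ⟨x, ?_⟩
    ext y
    constructor
    · rintro ⟨hy, hyq⟩
      exact hinj (ball_subset_closedBall hy) (ball_subset_closedBall hx) (hyq.trans hxq.symm)
    · rintro rfl
      exact ⟨hx, hxq⟩


/-- Diagonal linear map. -/
def diagL (a b : ℂ) : Cn 2 →L[ℂ] Cn 2 :=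
  ContinuousLinearMap.pi ![a • ContinuousLinearMap.proj 0, b • ContinuousLinearMap.proj 1]

theorem diagL_zero (a b : ℂ) (x : Cn 2) : diagL a b x 0 = a * x 0 := by simp [diagL]

theorem diagL_one (a b : ℂ) (x : Cn 2) : diagL a b x 1 = b * x 1 := by simp [diagL]

theorem ext2 {x y : Cn 2} (h0 : x 0 = y 0) (h1 : x 1 = y 1) : x = y := by
  funext i; fin_cases i
  · exact h0
  · exact h1

theorem diagL_bij {a b : ℂ} (ha : a ≠ 0) (hb : b ≠ 0) : Function.Bijective (diagL a b) := by
  constructor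
  · intro x y h
    have h0 := congrFun h 0
    have h1 := congrFun h 1
    rw [diagL_zero, diagL_zero] at h0
    rw [diagL_one, diagL_one] at h1
    exact ext2 (mul_left_cancel₀ ha h0) (mul_left_cancel₀ hb h1)
  · intro y
    refine ⟨![a⁻¹ * y 0, b⁻¹ * y 1], ext2 ?_ ?_⟩
    · rw [diagL_zero]; simp [ha]
    · rw [diagL_one]; simp [hb]

theorem norm2_le {x : Cn 2} {r : ℝ} (hr : 0 ≤ r) : ‖x‖ ≤ r ↔ ‖x 0‖ ≤ r ∧ ‖x 1‖ ≤ r := by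
  rw [pi_norm_le_iff_of_nonneg hr, Fin.forall_fin_two]

/-- The nonlinear part. -/
def vv (c1 c2 : ℂ) (α β : ℕ) (x : Cn 2) : Cn 2 := ![c1 * x 1 ^ β, c2 * x 0 ^ α]

/-- The polydisc. -/
def PD (α β : ℕ) (s : ℝ) : Set (Cn 2) := {x | ‖x 0‖ ≤ s ^ β ∧ ‖x 1‖ ≤ s ^ α}

theorem vv_le {c1 c2 : ℂ} (n1 : ‖c1‖ = 1) (n2 : ‖c2‖ = 1) {α β : ℕ} {s : ℝ} (hs : 0 < s)
    {x : Cn 2} (hx : x ∈ PD α β s) : ‖vv c1 c2 α β x‖ ≤ s ^ (α * β) := by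
  rw [norm2_le (by positivity)]
  simp only [vv, Matrix.cons_val_zero, Matrix.cons_val_one, norm_mul, norm_pow, n1, n2, one_mul]
  constructor
  · calc _ ≤ (s ^ α) ^ β := pow_le_pow_left₀ (norm_nonneg _) hx.2 _
      _ = _ := by rw [pow_mul]
  · calc _ ≤ (s ^ β) ^ α := pow_le_pow_left₀ (norm_nonneg _) hx.1 _
      _ = _ := by rw [mul_comm, pow_mul]

theorem countB {c1 c2 : ℂ} (n1 : ‖c1‖ = 1) (n2 : ‖c2‖ = 1) {α β : ℕ} (hα : α ≠ 0) (hβ : β ≠ 0)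
    {s : ℝ} (hs : 0 < s) {M : ℕ} (hM : M ≠ 0) (hh h' : Cn 2 → Cn 2)
    (hv : ∀ x ∈ PD α β s, ‖hh x + (M : ℂ) • vv c1 c2 α β x‖ ≤ eta α β / 2 * ‖vv c1 c2 α β x‖)
    (hd : ∀ x ∈ PD α β s, DifferentiableAt ℂ h' x)
    (hclose : ∀ x ∈ PD α β s, ‖h' x - hh x‖ ≤ eta α β / 2 * s ^ (α * β)) :
    {x ∈ PD α β s | h' x = 0}.Finite ∧ {x ∈ PD α β s | h' x = 0}.ncard ≤ α * β ∧
    ((∀ x ∈ PD α β s, h' x = 0 → Function.Bijective (fderiv ℂ h' x)) →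
      {x ∈ PD α β s | h' x = 0}.ncard = α * β) := by
  have c10 : c1 ≠ 0 := by rintro rfl; simp at n1
  have c20 : c2 ≠ 0 := by rintro rfl; simp at n2
  have hsc : (s : ℂ) ≠ 0 := by exact_mod_cast hs.ne'
  have hMc : (M : ℂ) ≠ 0 := by exact_mod_cast hM
  set σ : Cn 2 →L[ℂ] Cn 2 := diagL ((s : ℂ) ^ β) ((s : ℂ) ^ α) with hσ
  have σb : Function.Bijective σ := diagL_bij (pow_ne_zero _ hsc) (pow_ne_zero _ hsc)
  set k1 : ℂ := -((M : ℂ) * (s : ℂ) ^ (α * β) * c1)⁻¹ with hk1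
  set k2 : ℂ := -((M : ℂ) * (s : ℂ) ^ (α * β) * c2)⁻¹ with hk2
  have k10 : k1 ≠ 0 := by
    rw [hk1]; exact neg_ne_zero.2 (inv_ne_zero (by simp [hMc, hsc, c10]))
  have k20 : k2 ≠ 0 := by
    rw [hk2]; exact neg_ne_zero.2 (inv_ne_zero (by simp [hMc, hsc, c20]))
  set κ : Cn 2 →L[ℂ] Cn 2 := diagL k1 k2 with hκ
  have κb : Function.Bijective κ := diagL_bij k10 k20
  have nk1 : ‖k1‖ * s ^ (α * β) ≤ 1 := by
    rw [hk1, norm_neg, norm_inv, norm_mul, norm_mul, n1, norm_pow, Complex.norm_real,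
      Real.norm_of_nonneg hs.le, mul_one, Complex.norm_natCast, mul_inv, mul_assoc,
      inv_mul_cancel₀ (by positivity), mul_one]
    exact inv_le_one_of_one_le₀ (by exact_mod_cast Nat.one_le_iff_ne_zero.2 hM)
  have nk2 : ‖k2‖ * s ^ (α * β) ≤ 1 := by
    rw [hk2, norm_neg, norm_inv, norm_mul, norm_mul, n2, norm_pow, Complex.norm_real,
      Real.norm_of_nonneg hs.le, mul_one, Complex.norm_natCast, mul_inv, mul_assoc,
      inv_mul_cancel₀ (by positivity), mul_one]
    exact inv_le_one_of_one_le₀ (by exact_mod_cast Nat.one_le_iff_ne_zero.2 hM)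
  have σmem : ∀ y, σ y ∈ PD α β s ↔ y ∈ KK := by
    intro y
    rw [mem_KK, Fin.forall_fin_two]
    simp only [PD, Set.mem_ofPred_eq, hσ, diagL_zero, diagL_one, norm_mul, norm_pow,
      Complex.norm_real, Real.norm_of_nonneg hs.le]
    rw [mul_le_iff_le_one_right (by positivity), mul_le_iff_le_one_right (by positivity)]
  set g : Cn 2 → Cn 2 := fun y => κ (h' (σ y)) with hg
  have hest : ∀ x ∈ PD α β s, ‖h' x + (M : ℂ) • vv c1 c2 α β x‖ ≤ eta α β * s ^ (α * β) := by
    intro x hx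
    have e : h' x + (M : ℂ) • vv c1 c2 α β x =
      (h' x - hh x) + (hh x + (M : ℂ) • vv c1 c2 α β x) := by abel
    have := vv_le n1 n2 hs hx
    have h3 := mul_le_mul_of_nonneg_left this (half_pos (eta_pos α β)).le
    rw [e]
    refine (norm_add_le _ _).trans ?_
    linarith [hv x hx, hclose x hx]
  have hgd : ∀ y ∈ KK, HasFDerivAt g (κ.comp ((fderiv ℂ h' (σ y)).comp σ)) y := by
    intro y hy
    exact κ.hasFDerivAt.comp y (((hd _ ((σmem y).2 hy)).hasFDerivAt).comp y σ.hasFDerivAt)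
  have main := abstract_count α β hα hβ g (fun y hy => (hgd y hy).differentiableAt) ?_ ?_
  · have himg : {x ∈ PD α β s | h' x = 0} = σ '' {y ∈ KK | g y = 0} := by
      ext x
      constructor
      · rintro ⟨hx, hx0⟩
        obtain ⟨y, rfl⟩ := σb.2 x
        exact ⟨y, ⟨(σmem y).1 hx, by simp only [hg, hx0, map_zero]⟩, rfl⟩
      · rintro ⟨y, ⟨hy, hy0⟩, rfl⟩
        refine ⟨(σmem y).2 hy, κb.1 ?_⟩
        rw [map_zero]; exact hy0
    rw [himg, Set.ncard_image_of_injective _ σb.1]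
    refine ⟨main.1.image _, main.2.1, fun hb => main.2.2 fun y hy hy0 => ?_⟩
    rw [(hgd y hy).fderiv]
    have hy1 : h' (σ y) = 0 := κb.1 (by rw [map_zero]; exact hy0)
    exact κb.comp ((hb _ ((σmem y).2 hy) hy1).comp σb)
  · intro y hy
    have hx := (σmem y).2 hy
    have e : g y 0 - y 1 ^ β = k1 * ((h' (σ y) + (M : ℂ) • vv c1 c2 α β (σ y)) 0) := by
      simp only [hg, hκ, diagL_zero, Pi.add_apply, Pi.smul_apply, vv, Matrix.cons_val_zero,
        smul_eq_mul]
      rw [mul_add, sub_eq_add_neg]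
      congr 1
      rw [hσ, diagL_one, mul_pow, ← pow_mul, hk1]
      field_simp
    rw [e, norm_mul]
    have h1 := (norm_le_pi_norm (h' (σ y) + (M : ℂ) • vv c1 c2 α β (σ y)) 0).trans (hest _ hx)
    calc _ ≤ ‖k1‖ * (eta α β * s ^ (α * β)) := by gcongr
      _ = (‖k1‖ * s ^ (α * β)) * eta α β := by ring
      _ ≤ 1 * eta α β := by have := (eta_pos α β).le; gcongr
      _ = _ := one_mul _
  · intro y hy
    have hx := (σmem y).2 hy
    have e : g y 1 - y 0 ^ α = k2 * ((h' (σ y) + (M : ℂ) • vv c1 c2 α β (σ y)) 1) := by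
      simp only [hg, hκ, diagL_one, Pi.add_apply, Pi.smul_apply, vv, Matrix.cons_val_one, Matrix.cons_val_fin_one,
        smul_eq_mul]
      rw [mul_add, sub_eq_add_neg]
      congr 1
      rw [hσ, diagL_zero, mul_pow, ← pow_mul, hk2, mul_comm β α]
      field_simp
    rw [e, norm_mul]
    have h1 := (norm_le_pi_norm (h' (σ y) + (M : ℂ) • vv c1 c2 α β (σ y)) 1).trans (hest _ hx)
    calc _ ≤ ‖k2‖ * (eta α β * s ^ (α * β)) := by gcongr
      _ = (‖k2‖ * s ^ (α * β)) * eta α β := by ring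
      _ ≤ 1 * eta α β := by have := (eta_pos α β).le; gcongr
      _ = _ := one_mul _

theorem exists_PD {α β : ℕ} (hα : α ≠ 0) (hβ : β ≠ 0) {ρ : ℝ} (hρ : 0 < ρ) :
    ∃ s > 0, PD α β s ⊆ ball 0 ρ := by
  refine ⟨min 1 (ρ / 2), by positivity, fun x hx => ?_⟩
  have key : ∀ n : ℕ, n ≠ 0 → (min 1 (ρ / 2)) ^ n ≤ ρ / 2 := fun n hn =>
    (pow_le_of_le_one (by positivity) (min_le_left _ _) hn).trans (min_le_right _ _)
  have : ‖x‖ ≤ ρ / 2 := (norm2_le (by positivity)).2 ⟨hx.1.trans (key β hβ), hx.2.trans (key α hα)⟩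
  rw [mem_ball_zero_iff]; linarith

theorem PD_mem_nhds {α β : ℕ} {s : ℝ} (hs : 0 < s) : PD α β s ∈ 𝓝 (0 : Cn 2) := by
  apply Metric.mem_nhds_iff.2
  refine ⟨min (s ^ β) (s ^ α), by positivity, fun x hx => ?_⟩
  rw [mem_ball_zero_iff] at hx
  exact ⟨((norm_le_pi_norm x 0).trans hx.le).trans (min_le_left _ _),
    ((norm_le_pi_norm x 1).trans hx.le).trans (min_le_right _ _)⟩

/-- The family of maps commuting with the rotation. -/
def Gm (t c1 c2 : ℂ) (α β : ℕ) (x : Cn 2) : Cn 2 := t • x + vv c1 c2 α β x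

theorem Gm_commute {l₁ l₂ : ℂ} {α β : ℕ} (hl₁ : l₁ ^ α = l₂) (hl₂ : l₂ ^ β = l₁) (t c1 c2 : ℂ) :
    Function.Commute (diagL l₁ l₂) (Gm t c1 c2 α β) := by
  intro x
  apply ext2
  · simp only [Gm, diagL_zero, diagL_one, Pi.add_apply, Pi.smul_apply, vv, Matrix.cons_val_zero,
      smul_eq_mul, mul_pow, hl₂]
    ring
  · simp only [Gm, diagL_zero, diagL_one, Pi.add_apply, Pi.smul_apply, vv, Matrix.cons_val_one, Matrix.cons_val_fin_one,
      smul_eq_mul, mul_pow, hl₁]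
    ring

theorem diagL_iterate (a b : ℂ) (j : ℕ) (x : Cn 2) :
    (diagL a b)^[j] x = diagL (a ^ j) (b ^ j) x := by
  induction j with
  | zero => apply ext2 <;> simp [diagL_zero, diagL_one]
  | succ j ih =>
    rw [Function.iterate_succ_apply', ih]
    apply ext2
    · simp only [diagL_zero]; ring
    · simp only [diagL_one]; ring

theorem vv_analytic (c1 c2 : ℂ) (α β : ℕ) (x : Cn 2) : AnalyticAt ℂ (vv c1 c2 α β) x := by
  have h : ∀ i : Fin 2, AnalyticAt ℂ (fun x : Cn 2 => x i) x := fun i =>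
    (ContinuousLinearMap.proj (R := ℂ) (φ := fun _ : Fin 2 => ℂ) i).analyticAt x
  rw [analyticAt_pi_iff]
  intro i; fin_cases i
  · exact analyticAt_const.mul ((h 1).pow β)
  · exact analyticAt_const.mul ((h 0).pow α)

theorem Gm_analytic (t c1 c2 : ℂ) (α β : ℕ) (x : Cn 2) : AnalyticAt ℂ (Gm t c1 c2 α β) x :=
  AnalyticAt.add (f := (fun _ : Cn 2 => t) • id) (analyticAt_const.smul analyticAt_id)
    (vv_analytic c1 c2 α β x)

theorem vv_at_zero (c1 c2 : ℂ) {α β : ℕ} (hα : α ≠ 0) (hβ : β ≠ 0) : vv c1 c2 α β 0 = 0 := by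
  apply ext2 <;> simp [vv, hα, hβ]

theorem vv_strict (c1 c2 : ℂ) {α β : ℕ} (hα : 1 < α) (hβ : 1 < β) :
    HasStrictFDerivAt (vv c1 c2 α β) (0 : Cn 2 →L[ℂ] Cn 2) 0 := by
  have hz : ∀ (c : ℂ) (n : ℕ) (i : Fin 2), 1 < n →
      HasStrictFDerivAt (fun x : Cn 2 => c * x i ^ n) (0 : Cn 2 →L[ℂ] ℂ) 0 := by
    intro c n i hn
    have := ((hasStrictFDerivAt_apply (𝕜 := ℂ) i (0 : Cn 2)).pow n).const_mul c
    have hn1 : n - 1 ≠ 0 := by omega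
    have e : c • (n • (0 : Cn 2) i ^ (n - 1)) •
        (ContinuousLinearMap.proj (R := ℂ) (φ := fun _ : Fin 2 => ℂ) i) = 0 := by
      apply ContinuousLinearMap.ext
      intro y
      change c • (n • (0 : ℂ) ^ (n - 1)) • y i = 0
      simp [hn1]
    rw [e] at this
    exact this
  rw [hasStrictFDerivAt_pi']
  intro i; fin_cases i
  · exact hz c1 β 1 hβ
  · exact hz c2 α 0 hα

theorem vv_eq_zero {c1 c2 : ℂ} (n1 : ‖c1‖ = 1) (n2 : ‖c2‖ = 1) {α β : ℕ} {x : Cn 2}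
    (h : vv c1 c2 α β x = 0) : x = 0 := by
  have c10 : c1 ≠ 0 := by rintro rfl; simp at n1
  have c20 : c2 ≠ 0 := by rintro rfl; simp at n2
  have h0 := congrFun h 0
  have h1 := congrFun h 1
  simp only [vv, Matrix.cons_val_zero, Matrix.cons_val_one, Pi.zero_apply, mul_eq_zero, c10, c20,
    false_or] at h0 h1
  exact ext2 (eq_zero_of_pow_eq_zero h1) (eq_zero_of_pow_eq_zero h0)

theorem Gm_iter_little (c1 c2 : ℂ) {α β : ℕ} (hα : 1 < α) (hβ : 1 < β) (i : ℕ) :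
    (fun x => (Gm 1 c1 c2 α β)^[i] x - x - (i : ℂ) • vv c1 c2 α β x) =o[𝓝 0] vv c1 c2 α β := by
  have hG0 : Gm 1 c1 c2 α β 0 = 0 := by
    simp [Gm, vv_at_zero c1 c2 (by omega : α ≠ 0) (by omega : β ≠ 0)]
  have hcont : Continuous (Gm 1 c1 c2 α β) :=
    continuous_iff_continuousAt.2 fun x => (Gm_analytic _ _ _ _ _ x).continuousAt
  induction i with
  | zero => simp
  | succ i ih =>
    have hO : (fun x => (Gm 1 c1 c2 α β)^[i] x - x) =O[𝓝 0] vv c1 c2 α β := by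
      have h1 : (fun x => (i : ℂ) • vv c1 c2 α β x) =O[𝓝 0] vv c1 c2 α β :=
        (isBigO_refl (vv c1 c2 α β) _).const_smul_left (i : ℂ)
      refine (ih.isBigO.add h1).congr_left fun x => ?_
      abel
    have ht : Tendsto (fun x => ((Gm 1 c1 c2 α β)^[i] x, x)) (𝓝 0) (𝓝 ((0 : Cn 2), (0 : Cn 2))) := by
      rw [nhds_prod_eq]
      refine Tendsto.prodMk ?_ tendsto_id
      have := (hcont.iterate i).tendsto 0
      rwa [Function.iterate_fixed hG0] at this
    have hs := (vv_strict c1 c2 hα hβ).isLittleO.comp_tendsto ht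
    have hs2 : (fun x => vv c1 c2 α β ((Gm 1 c1 c2 α β)^[i] x) - vv c1 c2 α β x) =o[𝓝 0]
        vv c1 c2 α β := by
      refine IsLittleO.trans_isBigO ?_ hO
      simpa [Function.comp_def] using hs
    refine (ih.add hs2).congr_left fun x => ?_
    rw [Function.iterate_succ_apply']
    simp only [Gm, one_smul]
    push_cast
    rw [add_smul, one_smul]
    abel


/-- The standing hypotheses. -/
structure Setup (M : ℕ) (l₁ l₂ : ℂ) (α β : ℕ) : Prop where
  hM : 1 < M
  h₁ : IsPrimitiveRoot l₁ M
  h₂ : IsPrimitiveRoot l₂ M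
  hα : 1 < α
  hβ : 1 < β
  hl₁ : l₁ ^ α = l₂
  hl₂ : l₂ ^ β = l₁
  hαβ : α * β = M + 1

/-- The deformation of the map. -/
def Ft (l₁ l₂ : ℂ) (α β : ℕ) (t : ℂ) : Cn 2 → Cn 2 := diagL l₁ l₂ ∘ Gm t l₁⁻¹ l₂⁻¹ α β

theorem iter_analytic {f : Cn 2 → Cn 2} (hf : ∀ x, AnalyticAt ℂ f x) (j : ℕ) :
    ∀ x, AnalyticAt ℂ (f^[j]) x := by
  induction j with
  | zero => intro x; exact analyticAt_id
  | succ j ih =>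
    intro x
    rw [Function.iterate_succ]
    exact (ih (f x)).comp (hf x)

theorem Ft_analytic (l₁ l₂ : ℂ) (α β : ℕ) (t : ℂ) (x : Cn 2) :
    AnalyticAt ℂ (Ft l₁ l₂ α β t) x :=
  ((diagL l₁ l₂).analyticAt _).comp (Gm_analytic _ _ _ _ _ x)

namespace Setup

variable {M : ℕ} {l₁ l₂ : ℂ} {α β : ℕ}

theorem n1 (S : Setup M l₁ l₂ α β) : ‖l₁⁻¹‖ = 1 := by
  rw [norm_inv, S.h₁.norm'_eq_one (by have := S.hM; omega), inv_one]

theorem n2 (S : Setup M l₁ l₂ α β) : ‖l₂⁻¹‖ = 1 := by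
  rw [norm_inv, S.h₂.norm'_eq_one (by have := S.hM; omega), inv_one]

theorem hα0 (S : Setup M l₁ l₂ α β) : α ≠ 0 := by have := S.hα; omega

theorem hβ0 (S : Setup M l₁ l₂ α β) : β ≠ 0 := by have := S.hβ; omega

theorem iter (S : Setup M l₁ l₂ α β) (t : ℂ) (j : ℕ) (x : Cn 2) :
    (Ft l₁ l₂ α β t)^[j] x = diagL (l₁ ^ j) (l₂ ^ j) ((Gm t l₁⁻¹ l₂⁻¹ α β)^[j] x) := by
  rw [Ft, (Gm_commute S.hl₁ S.hl₂ t l₁⁻¹ l₂⁻¹).comp_iterate, Function.comp_apply, diagL_iterate]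

theorem iterM (S : Setup M l₁ l₂ α β) (t : ℂ) (x : Cn 2) :
    (Ft l₁ l₂ α β t)^[M] x = (Gm t l₁⁻¹ l₂⁻¹ α β)^[M] x := by
  rw [S.iter, S.h₁.pow_eq_one, S.h₂.pow_eq_one]
  apply ext2 <;> simp [diagL_zero, diagL_one]

theorem Ft_zero (S : Setup M l₁ l₂ α β) (t : ℂ) : Ft l₁ l₂ α β t 0 = 0 := by
  simp [Ft, Gm, vv_at_zero _ _ S.hα0 S.hβ0]

theorem near (S : Setup M l₁ l₂ α β) : ∃ r > 0, ∀ x ∈ closedBall (0 : Cn 2) r,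
    ‖(x - (Ft l₁ l₂ α β 1)^[M] x) + (M : ℂ) • vv l₁⁻¹ l₂⁻¹ α β x‖ ≤
      min (1 / 2) (eta α β / 2) * ‖vv l₁⁻¹ l₂⁻¹ α β x‖ := by
  have h := (Gm_iter_little l₁⁻¹ l₂⁻¹ S.hα S.hβ M).def
    (c := min (1 / 2) (eta α β / 2)) (by have := eta_pos α β; positivity)
  obtain ⟨r, hr, hsub⟩ := Metric.nhds_basis_closedBall.eventually_iff.1 h
  refine ⟨r, hr, fun x hx => ?_⟩
  have := hsub hx
  rw [S.iterM, ← norm_neg]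
  have e : -(x - (Gm 1 l₁⁻¹ l₂⁻¹ α β)^[M] x + (M : ℂ) • vv l₁⁻¹ l₂⁻¹ α β x) =
      (Gm 1 l₁⁻¹ l₂⁻¹ α β)^[M] x - x - (M : ℂ) • vv l₁⁻¹ l₂⁻¹ α β x := by abel
  rw [e]
  exact this

theorem only_zero (S : Setup M l₁ l₂ α β) {x : Cn 2}
    (h : ‖(x - (Ft l₁ l₂ α β 1)^[M] x) + (M : ℂ) • vv l₁⁻¹ l₂⁻¹ α β x‖ ≤
      min (1 / 2) (eta α β / 2) * ‖vv l₁⁻¹ l₂⁻¹ α β x‖) (hx : (Ft l₁ l₂ α β 1)^[M] x = x) :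
    x = 0 := by
  rw [hx, sub_self, zero_add, norm_smul, Complex.norm_natCast] at h
  apply vv_eq_zero S.n1 S.n2 (α := α) (β := β)
  by_contra hne
  have hp := norm_pos_iff.2 hne
  have h2 : (M : ℝ) ≤ min (1 / 2) (eta α β / 2) := le_of_mul_le_mul_right h hp
  have h3 := h2.trans (min_le_left _ _)
  have h4 : (1 : ℝ) < M := by exact_mod_cast S.hM
  linarith

theorem hasZeroOrder_M (S : Setup M l₁ l₂ α β) :
    HasZeroOrder (fun x => x - (Ft l₁ l₂ α β 1)^[M] x) 0 (α * β) := by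
  obtain ⟨r, hr, hnear⟩ := S.near
  set h : Cn 2 → Cn 2 := fun x => x - (Ft l₁ l₂ α β 1)^[M] x with hh
  have han : ∀ x, AnalyticAt ℂ h x := fun x =>
    AnalyticAt.sub (f := id) analyticAt_id (iter_analytic (Ft_analytic l₁ l₂ α β 1) M x)
  have hz : ∀ x ∈ closedBall (0 : Cn 2) r, h x = 0 → x = 0 := fun x hx hx0 =>
    S.only_zero (hnear x hx) (sub_eq_zero.1 hx0).symm
  refine ⟨r, hr, fun x _ => han x, ?_, hz, sard h 0 r (fun x _ => (han x).differentiableAt), ?_⟩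
  · simp [hh, Function.iterate_fixed (S.Ft_zero 1)]
  · obtain ⟨s, hs, hsub⟩ := exists_PD S.hα0 S.hβ0 hr
    have hK : IsCompact (closedBall (0 : Cn 2) r \ interior (PD α β s)) :=
      (isCompact_closedBall _ r).diff isOpen_interior
    obtain ⟨c, hc0, hcb⟩ : ∃ c > 0, ∀ x ∈ closedBall (0 : Cn 2) r \ interior (PD α β s),
        c ≤ ‖h x‖ := by
      rcases (closedBall (0 : Cn 2) r \ interior (PD α β s)).eq_empty_or_nonempty with he | hne
      · exact ⟨1, one_pos, fun x hx => by rw [he] at hx; exact hx.elim⟩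
      · obtain ⟨y, hy, hmin⟩ := hK.exists_isMinOn hne
          (fun x _ => ((han x).continuousAt.norm).continuousWithinAt)
        refine ⟨‖h y‖, norm_pos_iff.2 fun h0 => ?_, fun x hx => hmin hx⟩
        have := hz y hy.1 h0
        apply hy.2
        rw [this]; exact mem_interior_iff_mem_nhds.2 (PD_mem_nhds hs)
    refine ⟨min c (eta α β / 2 * s ^ (α * β)), by have := eta_pos α β; positivity, ?_⟩
    intro q hq hreg
    have q1 := hq.trans_le (min_le_left _ _)
    have q2 := hq.trans_le (min_le_right _ _)
    have e : {x ∈ ball (0 : Cn 2) r | h x = q} = {x ∈ PD α β s | h x - q = 0} := by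
      ext x
      constructor
      · rintro ⟨hx, hxq⟩
        refine ⟨?_, sub_eq_zero.2 hxq⟩
        by_contra hn
        have := hcb x ⟨ball_subset_closedBall hx, fun hi => hn (interior_subset hi)⟩
        rw [hxq] at this
        linarith
      · rintro ⟨hx, hxq⟩
        exact ⟨hsub hx, sub_eq_zero.1 hxq⟩
    rw [e]
    refine (countB S.n1 S.n2 S.hα0 S.hβ0 hs (M := M) (by have := S.hM; omega) h
      (fun x => h x - q) ?_ ?_ ?_).2.2 ?_
    · intro x hx
      refine (hnear x (ball_subset_closedBall (hsub hx))).trans ?_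
      gcongr
      exact min_le_right _ _
    · intro x hx
      exact (han x).differentiableAt.sub_const q
    · intro x hx
      simpa using q2.le
    · intro x hx hx0
      rw [fderiv_sub_const]
      exact hreg x (hsub hx) (sub_eq_zero.1 hx0)

theorem hasZeroOrder_j (S : Setup M l₁ l₂ α β) {j : ℕ} (hj : 0 < j) (hjM : j < M) :
    HasZeroOrder (fun x => x - (Ft l₁ l₂ α β 1)^[j] x) 0 1 := by
  apply hasZeroOrder_simple
  · exact fun x =>
      AnalyticAt.sub (f := id) analyticAt_id (iter_analytic (Ft_analytic l₁ l₂ α β 1) j x)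
  · simp [Function.iterate_fixed (S.Ft_zero 1)]
  · have hG : HasFDerivAt (Gm 1 l₁⁻¹ l₂⁻¹ α β) (ContinuousLinearMap.id ℂ (Cn 2)) 0 := by
      have h1 := (hasFDerivAt_id (𝕜 := ℂ) (0 : Cn 2)).add
        (vv_strict l₁⁻¹ l₂⁻¹ S.hα S.hβ).hasFDerivAt
      rw [add_zero] at h1
      have e : Gm 1 l₁⁻¹ l₂⁻¹ α β = id + vv l₁⁻¹ l₂⁻¹ α β := by
        funext x; simp [Gm]
      rw [e]; exact h1
    have hF : HasFDerivAt (Ft l₁ l₂ α β 1) (diagL l₁ l₂) 0 := by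
      have := (diagL l₁ l₂).hasFDerivAt.comp (0 : Cn 2) hG
      rwa [ContinuousLinearMap.comp_id] at this
    have hFj := hF.iterate (S.Ft_zero 1) j
    have hd := (hasFDerivAt_id (𝕜 := ℂ) (0 : Cn 2)).sub hFj
    have e : ContinuousLinearMap.id ℂ (Cn 2) - (diagL l₁ l₂) ^ j =
        diagL (1 - l₁ ^ j) (1 - l₂ ^ j) := by
      apply ContinuousLinearMap.ext
      intro x
      have : ((diagL l₁ l₂) ^ j) x = diagL (l₁ ^ j) (l₂ ^ j) x := by
        rw [← diagL_iterate]
        clear hd hFj hj hjM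
        induction j with
        | zero => rfl
        | succ j ih => rw [Function.iterate_succ_apply', ← ih, pow_succ']; rfl
      rw [sub_apply, this]
      apply ext2
      · simp only [Pi.sub_apply, diagL_zero, ContinuousLinearMap.id_apply]; ring
      · simp only [Pi.sub_apply, diagL_one, ContinuousLinearMap.id_apply]; ring
    rw [e] at hd
    have hfd : fderiv ℂ (fun x => x - (Ft l₁ l₂ α β 1)^[j] x) 0 =
      diagL (1 - l₁ ^ j) (1 - l₂ ^ j) := hd.fderiv
    rw [hfd]
    apply diagL_bij
    · intro h; exact S.h₁.pow_ne_one_of_pos_of_lt hj.ne' hjM (sub_eq_zero.1 h).symm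
    · intro h; exact S.h₂.pow_ne_one_of_pos_of_lt hj.ne' hjM (sub_eq_zero.1 h).symm

theorem dold (S : Setup M l₁ l₂ α β) : doldIndex (Ft l₁ l₂ α β 1) M = M := by
  have hM := S.hM
  have key : ∀ τ ∈ M.primeFactors.powerset,
      (-1 : ℤ) ^ τ.card * (fixedPointIndex ((Ft l₁ l₂ α β 1)^[M / (∏ p ∈ τ, p)]) 0 : ℤ) =
      (-1 : ℤ) ^ τ.card + (if τ = ∅ then (M : ℤ) else 0) := by
    intro τ hτ
    by_cases h : τ = ∅
    · subst h
      simp only [Finset.prod_empty, Nat.div_one, if_true, Finset.card_empty, pow_zero, one_mul]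
      rw [fixedPointIndex, S.hasZeroOrder_M.zeroOrder_eq, S.hαβ]
      push_cast; ring
    · rw [if_neg h, add_zero]
      have hsub := Finset.mem_powerset.1 hτ
      obtain ⟨p, hp⟩ := Finset.nonempty_iff_ne_empty.2 h
      have hdvd : ∏ p ∈ τ, p ∣ M :=
        (Finset.prod_dvd_prod_of_subset _ _ _ hsub).trans (Nat.prod_primeFactors_dvd M)
      have hpos : 0 < ∏ p ∈ τ, p := Nat.pos_of_dvd_of_pos hdvd (by omega)
      have hgt : 1 < ∏ p ∈ τ, p :=
        lt_of_lt_of_le (Nat.prime_of_mem_primeFactors (hsub hp)).one_lt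
          (Nat.le_of_dvd hpos (Finset.dvd_prod_of_mem _ hp))
      have j1 : 0 < M / ∏ p ∈ τ, p := Nat.div_pos (Nat.le_of_dvd (by omega) hdvd) hpos
      have j2 : M / ∏ p ∈ τ, p < M := Nat.div_lt_self (by omega) hgt
      rw [fixedPointIndex, (S.hasZeroOrder_j j1 j2).zeroOrder_eq]
      simp
  rw [doldIndex, Finset.sum_congr rfl key, Finset.sum_add_distrib,
    Finset.sum_powerset_neg_one_pow_card, if_neg, Finset.sum_ite_eq' ]
  · simp
  · intro h
    have := Nat.primeFactors_eq_empty.1 h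
    omega

end Setup


theorem iter_close {F : Cn 2 → Cn 2} (hF : Continuous F) {r : ℝ} (hr : 0 < r)
    {fk : ℕ → Cn 2 → Cn 2} (hu : TendstoUniformlyOn fk F atTop (ball (0 : Cn 2) r)) (i : ℕ) :
    ∀ ε > 0, ∀ᶠ k in atTop, ∀ x, (∀ j < i, (fk k)^[j] x ∈ ball (0 : Cn 2) r) →
      dist ((fk k)^[i] x) (F^[i] x) < ε := by
  induction i with
  | zero =>
    intro ε hε
    filter_upwards with k x _
    simpa using hε
  | succ i ih =>
    intro ε hε
    have huc : UniformContinuousOn F (closedBall (0 : Cn 2) (r + 1)) :=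
      (isCompact_closedBall _ _).uniformContinuousOn_of_continuous hF.continuousOn
    obtain ⟨δ, hδ, hFδ⟩ := Metric.uniformContinuousOn_iff.1 huc (ε / 2) (half_pos hε)
    have h1 := Metric.tendstoUniformlyOn_iff.1 hu (ε / 2) (half_pos hε)
    filter_upwards [h1, ih (min δ 1) (by positivity)] with k hk1 hk2 x hx
    have hclose := hk2 x (fun j hj => hx j (by omega))
    have hy := hx i (by omega)
    have hy1 : ‖(fk k)^[i] x‖ < r := by simpa using hy
    rw [Function.iterate_succ_apply', Function.iterate_succ_apply']
    have d1 := hk1 _ hy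
    have d2 := hFδ ((fk k)^[i] x) (by rw [mem_closedBall_zero_iff]; linarith) (F^[i] x) (by
      rw [mem_closedBall_zero_iff]
      have := hclose.trans_le (min_le_right _ _)
      rw [dist_comm, dist_eq_norm] at this
      have := norm_le_norm_add_norm_sub' (F^[i] x) ((fk k)^[i] x)
      linarith) (hclose.trans_le (min_le_left _ _))
    calc dist (fk k ((fk k)^[i] x)) (F (F^[i] x))
        ≤ dist (fk k ((fk k)^[i] x)) (F ((fk k)^[i] x)) +
          dist (F ((fk k)^[i] x)) (F (F^[i] x)) := dist_triangle _ _ _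
      _ < ε / 2 + ε / 2 := by rw [dist_comm] at d1; exact add_lt_add d1 d2
      _ = ε := by ring

theorem iter_stay {F : Cn 2 → Cn 2} (hF : Continuous F) (hF0 : F 0 = 0) {r : ℝ} (hr : 0 < r)
    {fk : ℕ → Cn 2 → Cn 2} (hu : TendstoUniformlyOn fk F atTop (ball (0 : Cn 2) r)) (i : ℕ) :
    ∃ ρ > 0, ∀ᶠ k in atTop, ∀ x ∈ ball (0 : Cn 2) ρ, ∀ j < i, (fk k)^[j] x ∈ ball (0 : Cn 2) r := by
  induction i with
  | zero => exact ⟨1, one_pos, by simp⟩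
  | succ i ih =>
    obtain ⟨ρ, hρ, hk⟩ := ih
    have hc := (hF.iterate i).tendsto 0
    rw [Function.iterate_fixed hF0] at hc
    obtain ⟨ρ', hρ', hsub⟩ := Metric.mem_nhds_iff.1 (hc (ball_mem_nhds (0 : Cn 2) (half_pos hr)))
    refine ⟨min ρ ρ', by positivity, ?_⟩
    filter_upwards [hk, iter_close hF hr hu i (r / 2) (half_pos hr)] with k h1 h2 x hx j hj
    have hx1 := ball_subset_ball (min_le_left _ _) hx
    have hx2 := hsub (ball_subset_ball (min_le_right _ _) hx)
    rcases Nat.lt_succ_iff_lt_or_eq.1 hj with hj | rfl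
    · exact h1 x hx1 j hj
    · have d := h2 x (h1 x hx1)
      have hx3 : dist (F^[j] x) 0 < r / 2 := hx2
      rw [mem_ball]
      have := dist_triangle ((fk k)^[j] x) (F^[j] x) 0
      linarith

theorem iter_an {f : Cn 2 → Cn 2} {U : Set (Cn 2)} (hf : AnalyticOnNhd ℂ f U) (i : ℕ) {x : Cn 2}
    (hx : ∀ j < i, f^[j] x ∈ U) : AnalyticAt ℂ (f^[i]) x := by
  induction i with
  | zero => exact analyticAt_id
  | succ i ih =>
    rw [Function.iterate_succ']
    exact (hf _ (hx i (by omega))).comp (ih fun j hj => hx j (by omega))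

theorem orbit_card {f : Cn 2 → Cn 2} {M m : ℕ} (hM : 1 < M) {B Z : Set (Cn 2)} (hf0 : f 0 = 0)
    (ho : AtLeastOrbits f M m B) (hZf : Z.Finite) (h0 : (0 : Cn 2) ∈ Z)
    (hZ : ∀ x, f^[M] x = x → (∀ j, f^[j] x ∈ B) → x ∈ Z) : m * M + 1 ≤ Z.ncard := by
  obtain ⟨p, hp, hd⟩ := ho
  have hper : ∀ i, Function.IsPeriodicPt f M (p i) := fun i => (hp i).1.1
  let φ : Option (Fin m × Fin M) → Cn 2 := fun o => o.elim 0 (fun a => f^[a.2] (p a.1))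
  have hne : ∀ i j, f^[j] (p i) ≠ 0 := by
    intro i j h
    have h1 : f^[j % M] (p i) = 0 := by rw [(hper i).iterate_mod_apply]; exact h
    have hlt : j % M < M := Nat.mod_lt _ (by omega)
    have h2 : f^[M] (p i) = 0 := by
      have e : M = (M - j % M) + j % M := by omega
      rw [e, Function.iterate_add_apply, h1, Function.iterate_fixed hf0]
    have h3 : p i = 0 := ((hp i).1.1).symm.trans h2
    exact (hp i).1.2 1 one_pos hM (by rw [h3]; simpa using hf0)
  have hφ : Function.Injective φ := by
    have key : ∀ (i i' : Fin m) (j j' : Fin M), f^[j] (p i) = f^[j'] (p i') → i = i' ∧ j = j' := by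
      intro i i' j j' h
      have h1 : f^[(M - j' + j) % M] (p i) = p i' := by
        rw [(hper i).iterate_mod_apply, Function.iterate_add_apply, h,
          ← Function.iterate_add_apply]
        have : M - (j' : ℕ) + j' = M := by have := j'.2; omega
        rw [this]; exact (hper i')
      have hlt : (M - (j' : ℕ) + j) % M < M := Nat.mod_lt _ (by omega)
      have hi : i = i' := by
        by_contra hii
        exact hd i i' hii _ hlt h1
      subst hi
      refine ⟨rfl, ?_⟩
      have hz : (M - (j' : ℕ) + j) % M = 0 := by
        by_contra hz
        exact (hp i).1.2 _ (Nat.pos_of_ne_zero hz) hlt h1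
      have b1 := j.2
      have b2 := j'.2
      apply Fin.ext
      obtain ⟨c, hc⟩ := Nat.dvd_of_mod_eq_zero hz
      have : c = 1 := by
        rcases Nat.lt_trichotomy c 1 with h | h | h
        · have : c = 0 := by omega
          subst this; omega
        · exact h
        · have : M * 2 ≤ M * c := Nat.mul_le_mul_left M h
          omega
      subst this
      omega
    rintro (_ | ⟨i, j⟩) (_ | ⟨i', j'⟩) h
    · rfl
    · exact (hne i' j' h.symm).elim
    · exact (hne i j h).elim
    · obtain ⟨rfl, rfl⟩ := key i i' j j' h
      rfl
  have hmem : ∀ o, φ o ∈ Z := by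
    rintro (_ | ⟨i, j⟩)
    · exact h0
    · apply hZ
      · exact (hper i).apply_iterate j
      · intro j'
        change f^[j'] (f^[j] (p i)) ∈ B
        rw [← Function.iterate_add_apply, ← (hper i).iterate_mod_apply]
        exact (hp i).2 _ (Nat.mod_lt _ (by omega))
  have hc : (range φ).ncard = m * M + 1 := by
    rw [← Set.image_univ, Set.ncard_image_of_injective _ hφ, Set.ncard_univ]
    simp
  rw [← hc]
  exact Set.ncard_le_ncard (range_subset_iff.2 hmem) hZf

namespace Setup

variable {M : ℕ} {l₁ l₂ : ℂ} {α β : ℕ}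

theorem upper (S : Setup M l₁ l₂ α β) {m : ℕ} {r : ℝ} (hr : 0 < r)
    (hz : ∀ x ∈ closedBall (0 : Cn 2) r, (Ft l₁ l₂ α β 1)^[M] x = x → x = 0)
    {fk : ℕ → Cn 2 → Cn 2}
    (han : ∀ k, AnalyticOnNhd ℂ (fk k) (ball (0 : Cn 2) r) ∧ fk k 0 = 0)
    (hu : TendstoUniformlyOn fk (Ft l₁ l₂ α β 1) atTop (ball (0 : Cn 2) r))
    (ho : ∀ k, AtLeastOrbits (fk k) M m (ball (0 : Cn 2) r)) : m ≤ 1 := by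
  have hM := S.hM
  set F := Ft l₁ l₂ α β 1 with hF
  have hFc : Continuous F :=
    continuous_iff_continuousAt.2 fun x => (Ft_analytic l₁ l₂ α β 1 x).continuousAt
  obtain ⟨r0, hr0, hnear⟩ := S.near
  obtain ⟨ρ, hρ, hstay⟩ := iter_stay hFc (S.Ft_zero 1) hr hu M
  obtain ⟨s, hs, hsub⟩ := exists_PD S.hα0 S.hβ0 (ρ := min ρ r0) (by positivity)
  have hsub1 := hsub.trans (ball_subset_ball (min_le_left _ _))
  have hsub2 := hsub.trans ((ball_subset_ball (min_le_right _ _)).trans ball_subset_closedBall)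
  have hK : IsCompact (closedBall (0 : Cn 2) r \ interior (PD α β s)) :=
    (isCompact_closedBall _ r).diff isOpen_interior
  obtain ⟨c, hc0, hcb⟩ : ∃ c > 0, ∀ x ∈ closedBall (0 : Cn 2) r \ interior (PD α β s),
      c ≤ ‖x - F^[M] x‖ := by
    rcases (closedBall (0 : Cn 2) r \ interior (PD α β s)).eq_empty_or_nonempty with he | hne
    · exact ⟨1, one_pos, fun x hx => by rw [he] at hx; exact hx.elim⟩
    · obtain ⟨y, hy, hmin⟩ := hK.exists_isMinOn hne
        ((continuous_id.sub (hFc.iterate M)).norm.continuousOn)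
      refine ⟨‖y - F^[M] y‖, norm_pos_iff.2 fun h0 => ?_, fun x hx => hmin hx⟩
      have := hz y hy.1 (sub_eq_zero.1 h0).symm
      apply hy.2
      rw [this]; exact mem_interior_iff_mem_nhds.2 (PD_mem_nhds hs)
  have hclose := iter_close hFc hr hu M (min c (eta α β / 2 * s ^ (α * β)))
    (by have := eta_pos α β; positivity)
  obtain ⟨k, hk1, hk2⟩ := (hstay.and hclose).exists
  have hcount := countB S.n1 S.n2 S.hα0 S.hβ0 hs (M := M) (by omega) (fun x => x - F^[M] x)
    (fun x => x - (fk k)^[M] x) (by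
      intro x hx
      refine (hnear x (hsub2 hx)).trans ?_
      gcongr
      exact min_le_right _ _) (by
      intro x hx
      exact differentiableAt_id.sub (iter_an (han k).1 M (hk1 x (hsub1 hx))).differentiableAt) (by
      intro x hx
      have := (hk2 x (hk1 x (hsub1 hx))).trans_le (min_le_right _ _)
      rw [dist_comm, dist_eq_norm] at this
      have e : x - (fk k)^[M] x - (x - F^[M] x) = F^[M] x - (fk k)^[M] x := by abel
      rw [e]
      exact this.le)
  have hfin := orbit_card hM (han k).2 (ho k) hcount.1
    ⟨mem_of_mem_nhds (PD_mem_nhds hs), by simp [Function.iterate_fixed (han k).2]⟩ (by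
      intro x hx hxB
      refine ⟨?_, sub_eq_zero.2 hx.symm⟩
      by_contra hn
      have h1 := hcb x ⟨ball_subset_closedBall (hxB 0), fun hi => hn (interior_subset hi)⟩
      have h2 := (hk2 x (fun j _ => hxB j)).trans_le (min_le_left _ _)
      rw [hx, dist_eq_norm] at h2
      linarith)
  have h3 := hfin.trans hcount.2.1
  rw [S.hαβ] at h3
  have h4 : m * M ≤ 1 * M := by omega
  exact Nat.le_of_mul_le_mul_right h4 (by omega)

theorem Ft_orbit (S : Setup M l₁ l₂ α β) {ε : ℂ} {x : Cn 2} {r : ℝ} (hxr : ‖x‖ < r)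
    (hx0 : x 0 ≠ 0) (hx1 : x 1 ≠ 0)
    (hfix : ε • x + vv l₁⁻¹ l₂⁻¹ α β x = 0) :
    AtLeastOrbits (Ft l₁ l₂ α β (1 + ε)) M 1 (ball (0 : Cn 2) r) := by
  have hM := S.hM
  have hG : Gm (1 + ε) l₁⁻¹ l₂⁻¹ α β x = x := by
    rw [Gm, add_smul, one_smul, add_assoc, hfix, add_zero]
  have hit : ∀ j, (Ft l₁ l₂ α β (1 + ε))^[j] x = diagL (l₁ ^ j) (l₂ ^ j) x := by
    intro j
    rw [S.iter, Function.iterate_fixed hG]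
  have hn1 : ‖l₁‖ = 1 := S.h₁.norm'_eq_one (by omega)
  have hn2 : ‖l₂‖ = 1 := S.h₂.norm'_eq_one (by omega)
  refine ⟨fun _ => x, fun _ => ⟨⟨?_, ?_⟩, ?_⟩, fun i j hij => (hij (Subsingleton.elim i j)).elim⟩
  · rw [S.iterM, Function.iterate_fixed hG]
  · intro j hj hjM h
    rw [hit] at h
    have h0 := congrFun h 0
    rw [diagL_zero] at h0
    exact S.h₁.pow_ne_one_of_pos_of_lt hj.ne' hjM (mul_right_cancel₀ hx0 (h0.trans (one_mul _).symm))
  · intro j _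
    rw [hit, mem_ball_zero_iff]
    refine lt_of_le_of_lt ?_ hxr
    rw [norm2_le (norm_nonneg _), diagL_zero, diagL_one, norm_mul, norm_mul, norm_pow, norm_pow,
      hn1, hn2, one_pow, one_mul, one_mul]
    exact ⟨norm_le_pi_norm x 0, norm_le_pi_norm x 1⟩

theorem exists_pt (S : Setup M l₁ l₂ α β) : ∃ C > 0, ∀ u : ℝ, 0 < u → u ≤ 1 →
    ∃ x : Cn 2, ‖x‖ ≤ C * u ∧ x 0 ≠ 0 ∧ x 1 ≠ 0 ∧
      ((u : ℂ) ^ M) • x + vv l₁⁻¹ l₂⁻¹ α β x = 0 := by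
  have hM := S.hM
  have c10 : l₁⁻¹ ≠ 0 := by intro h; have := S.n1; rw [h] at this; simp at this
  have c20 : l₂⁻¹ ≠ 0 := by intro h; have := S.n2; rw [h] at this; simp at this
  set c1 := l₁⁻¹
  set c2 := l₂⁻¹
  have hD : -c1 * (-c2) ^ β ≠ 0 := mul_ne_zero (neg_ne_zero.2 c10) (pow_ne_zero _ (neg_ne_zero.2 c20))
  obtain ⟨a, ha⟩ := IsAlgClosed.exists_pow_nat_eq ((-c1 * (-c2) ^ β)⁻¹) (n := M) (by omega)
  have ha0 : a ≠ 0 := by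
    rintro rfl
    rw [zero_pow (by omega)] at ha
    exact inv_ne_zero hD ha.symm
  set b := -c2 * a ^ α with hb
  have hb0 : b ≠ 0 := mul_ne_zero (neg_ne_zero.2 c20) (pow_ne_zero _ ha0)
  have hab : a = -c1 * b ^ β := by
    rw [hb, mul_pow, ← pow_mul, S.hαβ, pow_succ, ha, ← mul_assoc, ← mul_assoc,
      mul_inv_cancel₀ hD, one_mul]
  refine ⟨‖a‖ + ‖b‖, by have := norm_pos_iff.2 ha0; positivity, fun u hu hu1 => ?_⟩
  have huc : (u : ℂ) ≠ 0 := by exact_mod_cast hu.ne'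
  refine ⟨![a * (u : ℂ) ^ (β + 1), b * (u : ℂ) ^ (α + 1)], ?_, ?_, ?_, ?_⟩
  · have hp : ∀ n : ℕ, u ^ (n + 1) ≤ u := fun n => pow_le_of_le_one hu.le hu1 (by omega)
    rw [norm2_le (by positivity)]
    simp only [Matrix.cons_val_zero, Matrix.cons_val_one, Matrix.cons_val_fin_one, norm_mul,
      norm_pow, Complex.norm_real, Real.norm_of_nonneg hu.le]
    constructor
    · calc ‖a‖ * u ^ (β + 1) ≤ ‖a‖ * u := by gcongr; exact hp β
        _ ≤ (‖a‖ + ‖b‖) * u := by gcongr; linarith [norm_nonneg b]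
    · calc ‖b‖ * u ^ (α + 1) ≤ ‖b‖ * u := by gcongr; exact hp α
        _ ≤ (‖a‖ + ‖b‖) * u := by gcongr; linarith [norm_nonneg a]
  · simp [ha0, huc]
  · simp [hb0, huc]
  · apply ext2
    · simp only [Pi.add_apply, Pi.smul_apply, vv, Matrix.cons_val_zero, Matrix.cons_val_one,
        Matrix.cons_val_fin_one, smul_eq_mul, Pi.zero_apply]
      have e : ((u : ℂ) ^ (α + 1)) ^ β = (u : ℂ) ^ M * (u : ℂ) ^ (β + 1) := by
        rw [← pow_mul, add_mul, S.hαβ, ← pow_add]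
        congr 1; ring
      rw [mul_pow, e]
      linear_combination (u : ℂ) ^ M * (u : ℂ) ^ (β + 1) * hab
    · simp only [Pi.add_apply, Pi.smul_apply, vv, Matrix.cons_val_zero, Matrix.cons_val_one,
        Matrix.cons_val_fin_one, smul_eq_mul, Pi.zero_apply]
      have e : ((u : ℂ) ^ (β + 1)) ^ α = (u : ℂ) ^ M * (u : ℂ) ^ (α + 1) := by
        rw [← pow_mul, add_mul, mul_comm β α, S.hαβ, ← pow_add]
        congr 1; ring
      rw [mul_pow, e]
      linear_combination (u : ℂ) ^ M * (u : ℂ) ^ (α + 1) * hb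

theorem hidden (S : Setup M l₁ l₂ α β) : hiddenOrbits (Ft l₁ l₂ α β 1) M = 1 := by
  have hM := S.hM
  rw [hiddenOrbits]
  apply IsGreatest.csSup_eq
  constructor
  · obtain ⟨r, hr, hnear⟩ := S.near
    obtain ⟨C, hC, hpt⟩ := S.exists_pt
    set u : ℕ → ℝ := fun k => min 1 (r / (2 * C)) * (1 / ((k : ℝ) + 1)) with hudef
    have hk1 : ∀ k : ℕ, 1 / ((k : ℝ) + 1) ≤ 1 := fun k => by
      rw [div_le_one (by positivity)]; have : (0 : ℝ) ≤ k := by positivity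
      linarith
    have hu0 : ∀ k, 0 < u k := fun k => by simp only [hudef]; positivity
    have hu1 : ∀ k, u k ≤ min 1 (r / (2 * C)) := fun k =>
      mul_le_of_le_one_right (by positivity) (hk1 k)
    have hut : Tendsto u atTop (𝓝 0) := by
      have := (tendsto_one_div_add_atTop_nhds_zero_nat (𝕜 := ℝ)).const_mul (min 1 (r / (2 * C)))
      rwa [mul_zero] at this
    refine ⟨r, hr, fun x hx => S.only_zero (hnear x hx),
      fun k => Ft l₁ l₂ α β (1 + (u k : ℂ) ^ M), ?_, ?_, ?_⟩
    · exact fun k => ⟨fun x _ => Ft_analytic _ _ _ _ _ x, S.Ft_zero _⟩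
    · rw [Metric.tendstoUniformlyOn_iff]
      intro ε hε
      have ht : Tendsto (fun k => (u k) ^ M * r) atTop (𝓝 0) := by
        have := (hut.pow M).mul_const r
        rwa [zero_pow (by omega), zero_mul] at this
      filter_upwards [ht.eventually_lt_const hε] with k hk x hx
      have hxr : ‖x‖ < r := by simpa using hx
      refine lt_of_le_of_lt ?_ hk
      have e : Ft l₁ l₂ α β (1 + (u k : ℂ) ^ M) x - Ft l₁ l₂ α β 1 x =
          diagL l₁ l₂ (((u k : ℂ) ^ M) • x) := by
        simp only [Ft, Function.comp_apply, Gm]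
        rw [← map_sub, add_smul]
        congr 1
        abel
      have hn1 : ‖l₁‖ = 1 := S.h₁.norm'_eq_one (by omega)
      have hn2 : ‖l₂‖ = 1 := S.h₂.norm'_eq_one (by omega)
      have hup := (hu0 k).le
      rw [dist_comm, dist_eq_norm, e, norm2_le (by positivity), diagL_zero, diagL_one, norm_mul,
        norm_mul, hn1, hn2, one_mul, one_mul]
      simp only [Pi.smul_apply, smul_eq_mul, norm_mul, norm_pow, Complex.norm_real,
        Real.norm_of_nonneg hup]
      constructor
      · gcongr; exact (norm_le_pi_norm x 0).trans hxr.le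
      · gcongr; exact (norm_le_pi_norm x 1).trans hxr.le
    · intro k
      obtain ⟨x, hx, hx0, hx1, hfix⟩ := hpt (u k) (hu0 k) ((hu1 k).trans (min_le_left _ _))
      refine S.Ft_orbit (lt_of_le_of_lt hx ?_) hx0 hx1 hfix
      have h2 := (hu1 k).trans (min_le_right _ _)
      calc C * u k ≤ C * (r / (2 * C)) := by gcongr
        _ = r / 2 := by field_simp
        _ < r := half_lt_self hr
  · rintro m ⟨r, hr, hz, fk, han, hu, ho⟩
    exact S.upper hr hz han hu ho

end Setup

/-- For `F(x₁,x₂) = (λ₁x₁ + x₂^β, λ₂x₂ + x₁^α)` with `λ₁, λ₂` primitive `M`-th roots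
of unity, `1 < α, β < M`, `λ₁^α = λ₂`, `λ₂^β = λ₁` and `αβ = M + 1`: `0` is an
isolated fixed point of `F` and `F^M`, with `μ_F(0) = 1`, `μ_{F^M}(0) = αβ = M + 1`,
`P_M(F,0) = M` and `𝒪_M(F,0) = 1`. -/
theorem counterexample_b2 (M : ℕ) (hM : 1 < M) (l₁ l₂ : ℂ)
    (h₁ : IsPrimitiveRoot l₁ M) (h₂ : IsPrimitiveRoot l₂ M)
    (α β : ℕ) (hα₁ : 1 < α) (hαM : α < M) (hβ₁ : 1 < β) (hβM : β < M)
    (hl₁ : l₁ ^ α = l₂) (hl₂ : l₂ ^ β = l₁) (hαβ : α * β = M + 1)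
    (F : Cn 2 → Cn 2)
    (hform : F = fun x => ![l₁ * x 0 + x 1 ^ β, l₂ * x 1 + x 0 ^ α]) :
    IsolatedFixedPtAt0 F ∧ IsolatedFixedPtAt0 (F^[M]) ∧
    fixedPointIndex F 0 = 1 ∧
    fixedPointIndex (F^[M]) 0 = α * β ∧
    fixedPointIndex (F^[M]) 0 = M + 1 ∧
    doldIndex F M = (M : ℤ) ∧
    hiddenOrbits F M = 1 := by
  have S : Setup M l₁ l₂ α β := ⟨hM, h₁, h₂, hα₁, hβ₁, hl₁, hl₂, hαβ⟩
  have hl10 : l₁ ≠ 0 := h₁.ne_zero (by omega)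
  have hl20 : l₂ ≠ 0 := h₂.ne_zero (by omega)
  have hF : F = Ft l₁ l₂ α β 1 := by
    rw [hform]
    funext x
    apply ext2
    · simp [Ft, Gm, vv, diagL_zero, mul_add, hl10]
      rfl
    · simp [Ft, Gm, vv, diagL_one, mul_add, hl20]
      rfl
  rw [hF]
  have hone : HasZeroOrder (fun x => x - Ft l₁ l₂ α β 1 x) 0 1 := S.hasZeroOrder_j one_pos hM
  have hidx : fixedPointIndex ((Ft l₁ l₂ α β 1)^[M]) 0 = α * β := S.hasZeroOrder_M.zeroOrder_eq
  exact ⟨hone.isolated, S.hasZeroOrder_M.isolated, hone.zeroOrder_eq, hidx, hidx.trans hαβ,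
    S.dold, S.hidden⟩

end ZhangPaper
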